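/- arXiv:2510.06493 — 3 statements merged into one kernel-verified Lean document; each statement's English description precedes it below -/
import Mathlib

section
/- For every n ≥ 1, the set P_up(n) of upward patterns of size n occurring in the Sierpiński triangle T is finite and has exactly 4n² − 6n + 4 elements, i.e. A_n = 4n² − 6n + 4. -/
/-- Whether the unit triangle at row `r`, column `c` of the Sierpiński triangle is filled:
upward units `(r, 2j)` are filled iff `choose r j` is odd; downward units are unfilled. -/
def filled (r c : ℕ) : Bool :=
  decide (c % 2 = 0 ∧ Nat.choose r (c / 2) % 2 = 1)

/-- The upward pattern of size `n` at upward position `(r, c)`. -/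
def upPattern (n r c : ℕ) : ℕ × ℕ → Bool := fun q =>
  if q.1 < n ∧ q.2 ≤ 2 * q.1 then filled (r + q.1) (c + q.2) else false

/-- The set of all upward patterns of size `n` occurring in the Sierpiński triangle. -/
def Pup (n : ℕ) : Set (ℕ × ℕ → Bool) :=
  { p | ∃ r c : ℕ, c % 2 = 0 ∧ c ≤ 2 * r ∧ p = upPattern n r c }

/-- The downward pattern of size `n` at downward position `(r, c)`. -/
def downPattern (n r c : ℕ) : ℕ × ℕ → Bool := fun q =>
  if q.1 < n ∧ q.2 ≤ 2 * (n - 1 - q.1) then filled (r + q.1) (c + 2 * q.1 + q.2) else false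

/-- The set of all downward patterns of size `n` occurring in the Sierpiński triangle. -/
def Pdown (n : ℕ) : Set (ℕ × ℕ → Bool) :=
  { p | ∃ r c : ℕ, c % 2 = 1 ∧ c + 2 * (n - 1) ≤ 2 * r ∧ p = downPattern n r c }

/-- The top-cut pattern of size `n` at upward position `(r, c)` (apex unit removed). -/
def topCutPattern (n r c : ℕ) : ℕ × ℕ → Bool := fun q =>
  if 1 ≤ q.1 ∧ q.1 < n ∧ q.2 ≤ 2 * q.1 then filled (r + q.1) (c + q.2) else false

/-- The set of all top-cut patterns of size `n` occurring in the Sierpiński triangle. -/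
def PtopCut (n : ℕ) : Set (ℕ × ℕ → Bool) :=
  { p | ∃ r c : ℕ, c % 2 = 0 ∧ c ≤ 2 * r ∧ p = topCutPattern n r c }

/-- The bottom-cut pattern of size `n` at upward position `(r, c)`
(both bottom corner units removed). -/
def botCutPattern (n r c : ℕ) : ℕ × ℕ → Bool := fun q =>
  if (q.1 < n ∧ q.2 ≤ 2 * q.1) ∧ ¬(q.1 = n - 1 ∧ (q.2 = 0 ∨ q.2 = 2 * (n - 1)))
  then filled (r + q.1) (c + q.2) else false

/-- The set of all bottom-cut patterns of size `n` occurring in the Sierpiński triangle. -/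
def PbotCut (n : ℕ) : Set (ℕ × ℕ → Bool) :=
  { p | ∃ r c : ℕ, c % 2 = 0 ∧ c ≤ 2 * r ∧ p = botCutPattern n r c }

/-- The fully-cut pattern of size `n` at upward position `(r, c)`
(all three corner units removed). -/
def fullyCutPattern (n r c : ℕ) : ℕ × ℕ → Bool := fun q =>
  if (q.1 < n ∧ q.2 ≤ 2 * q.1) ∧ q ≠ (0, 0) ∧ ¬(q.1 = n - 1 ∧ (q.2 = 0 ∨ q.2 = 2 * (n - 1)))
  then filled (r + q.1) (c + q.2) else false

/-- The set of all fully-cut patterns of size `n` occurring in the Sierpiński triangle. -/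
def PfullyCut (n : ℕ) : Set (ℕ × ℕ → Bool) :=
  { p | ∃ r c : ℕ, c % 2 = 0 ∧ c ≤ 2 * r ∧ p = fullyCutPattern n r c }

/-- Upward patterns of size `m` occurring inside the approximation `T_N`
(rows `0, …, 2^N - 1`). -/
def PupN (N m : ℕ) : Set (ℕ × ℕ → Bool) :=
  { p | ∃ r c : ℕ, c % 2 = 0 ∧ c ≤ 2 * r ∧ r + m ≤ 2 ^ N ∧ p = upPattern m r c }

/-- Upward patterns of size `n` at positions with `r ≡ ρ [MOD 2]` and `c ≡ γ [MOD 4]`. -/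
def PupRC (n ρ γ : ℕ) : Set (ℕ × ℕ → Bool) :=
  { p | ∃ r c : ℕ, c % 2 = 0 ∧ c ≤ 2 * r ∧ r % 2 = ρ ∧ c % 4 = γ ∧ p = upPattern n r c }

/-- Downward patterns of size `n` at positions with `r ≡ ρ [MOD 2]` and `c ≡ γ [MOD 4]`. -/
def PdownRC (n ρ γ : ℕ) : Set (ℕ × ℕ → Bool) :=
  { p | ∃ r c : ℕ, c % 2 = 1 ∧ c + 2 * (n - 1) ≤ 2 * r ∧ r % 2 = ρ ∧ c % 4 = γ ∧
      p = downPattern n r c }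

/-- Top-cut patterns of size `n` at positions with `r ≡ ρ [MOD 2]` and `c ≡ γ [MOD 4]`. -/
def PtopCutRC (n ρ γ : ℕ) : Set (ℕ × ℕ → Bool) :=
  { p | ∃ r c : ℕ, c % 2 = 0 ∧ c ≤ 2 * r ∧ r % 2 = ρ ∧ c % 4 = γ ∧ p = topCutPattern n r c }

/-- Fully-cut patterns of size `n` at positions with `r ≡ ρ [MOD 2]` and `c ≡ γ [MOD 4]`. -/
def PfullyCutRC (n ρ γ : ℕ) : Set (ℕ × ℕ → Bool) :=
  { p | ∃ r c : ℕ, c % 2 = 0 ∧ c ≤ 2 * r ∧ r % 2 = ρ ∧ c % 4 = γ ∧ p = fullyCutPattern n r c }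

/-- The everywhere-unfilled upward pattern. -/
def blankUp : ℕ × ℕ → Bool := fun _ => false

/-- The upward pattern that is filled exactly at the apex `(0, 0)`. -/
def topUp : ℕ × ℕ → Bool := fun q => decide (q = (0, 0))

/-- The size-`N` upward pattern that is filled exactly at the bottom-left corner `(N-1, 0)`. -/
def botleftUp (N : ℕ) : ℕ × ℕ → Bool := fun q => decide (q = (N - 1, 0))

/-- The size-`N` upward pattern filled exactly at the bottom-right corner `(N-1, 2(N-1))`. -/
def botrightUp (N : ℕ) : ℕ × ℕ → Bool := fun q => decide (q = (N - 1, 2 * (N - 1)))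

/-- The everywhere-unfilled downward pattern. -/
def blankDown : ℕ × ℕ → Bool := fun _ => false

/-- The size-`N` downward pattern filled exactly at the upward units along the top side:
positions `(0, m)` with `m` odd, `1 ≤ m ≤ 2N - 3`. -/
def topsideDown (N : ℕ) : ℕ × ℕ → Bool := fun q =>
  decide (q.1 = 0 ∧ q.2 % 2 = 1 ∧ 1 ≤ q.2 ∧ q.2 ≤ 2 * N - 3)

/-- The size-`N` downward pattern filled exactly at the upward units along the left side:
positions `(k, 1)` with `0 ≤ k ≤ N - 2`. -/
def leftsideDown (N : ℕ) : ℕ × ℕ → Bool := fun q =>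
  decide (q.2 = 1 ∧ q.1 ≤ N - 2)

/-- The size-`N` downward pattern filled exactly at the upward units along the right side:
positions `(k, 2(N-1-k) - 1)` with `0 ≤ k ≤ N - 2`. -/
def rightsideDown (N : ℕ) : ℕ × ℕ → Bool := fun q =>
  decide (q.1 ≤ N - 2 ∧ q.2 = 2 * (N - 1 - q.1) - 1)

namespace SierpAux

/-- Pascal triangle mod 2. -/
def b (x y : ℕ) : Bool := decide (Nat.choose x y % 2 = 1)

theorem b_step (x y : ℕ) :
    b x y = if x % 2 = 0 ∧ y % 2 = 1 then false else b (x / 2) (y / 2) := by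
  have : Fact (Nat.Prime 2) := ⟨Nat.prime_two⟩
  have h := Choose.choose_modEq_choose_mod_mul_choose_div_nat (n := x) (k := y) (p := 2)
  unfold b
  unfold Nat.ModEq at h
  rw [h]
  rcases Nat.mod_two_eq_zero_or_one x with hx | hx <;>
  rcases Nat.mod_two_eq_zero_or_one y with hy | hy <;> simp [hx, hy]

theorem b_zero_kind {x y : ℕ} (hx : x % 2 = 0) (hy : y % 2 = 1) : b x y = false := by
  rw [b_step]; simp [hx, hy]

theorem b_half {x y : ℕ} (h : ¬ (x % 2 = 0 ∧ y % 2 = 1)) : b x y = b (x / 2) (y / 2) := by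
  rw [b_step, if_neg h]

theorem b_lt {x y : ℕ} (h : x < y) : b x y = false := by
  simp [b, Nat.choose_eq_zero_of_lt h]

theorem b_zero_right (x : ℕ) : b x 0 = true := by simp [b]

theorem b_self (x : ℕ) : b x x = true := by simp [b]

theorem b_pow (N : ℕ) : ∀ (A B x y : ℕ), x < 2 ^ N → y < 2 ^ N →
    b (A * 2 ^ N + x) (B * 2 ^ N + y) = (b A B && b x y) := by
  induction N with
  | zero =>
    intro A B x y hx hy
    have hx : x = 0 := by simpa using hx
    have hy : y = 0 := by simpa using hy
    subst hx hy; simp [b_self]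
  | succ N ih =>
    intro A B x y hx hy
    have e1 : (A * 2 ^ (N + 1) + x) = 2 * (A * 2 ^ N) + x := by ring
    have e2 : (B * 2 ^ (N + 1) + y) = 2 * (B * 2 ^ N) + y := by ring
    have h2 : (2:ℕ) ^ (N + 1) = 2 * 2 ^ N := by ring
    have := ih A B (x / 2) (y / 2) (by omega) (by omega)
    rw [e1, e2, b_step, b_step x y]
    have f1 : (2 * (A * 2 ^ N) + x) / 2 = A * 2 ^ N + x / 2 := by omega
    have f2 : (2 * (B * 2 ^ N) + y) / 2 = B * 2 ^ N + y / 2 := by omega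
    have f3 : (2 * (A * 2 ^ N) + x) % 2 = x % 2 := by omega
    have f4 : (2 * (B * 2 ^ N) + y) % 2 = y % 2 := by omega
    rw [f1, f2, f3, f4, this]
    split_ifs <;> simp

theorem b_blk {N : ℕ} (A B x y : ℕ) {X Y : ℕ} (hX : X = A * 2 ^ N + x) (hY : Y = B * 2 ^ N + y)
    (hx : x < 2 ^ N) (hy : y < 2 ^ N) : b X Y = (b A B && b x y) := by
  subst hX hY; exact b_pow N A B x y hx hy

theorem b_full (N : ℕ) : ∀ y, y < 2 ^ N → b (2 ^ N - 1) y = true := by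
  induction N with
  | zero => intro y hy; have : y = 0 := by simpa using hy
            subst this; simp [b]
  | succ N ih =>
    intro y hy
    have h2 : (2:ℕ) ^ (N + 1) = 2 * 2 ^ N := by ring
    have hp : 0 < 2 ^ N := by positivity
    rw [b_half (by omega)]
    rw [show (2 ^ (N + 1) - 1) / 2 = 2 ^ N - 1 by omega]
    exact ih _ (by omega)

/-- The hexagonal shape: a size-`n` triangle with top/left/right corner cut
when `t`/`l`/`r` is `1`. -/
def sh (t l r n k i : ℕ) : Prop :=
  i ≤ k ∧ k < n ∧ t ≤ k ∧ k + 1 + l ≤ i + n ∧ i + 1 + r ≤ n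

instance (t l r n k i : ℕ) : Decidable (sh t l r n k i) := by unfold sh; infer_instance

/-- Pattern of the cut shape at `(x, y)`. -/
def pat (t l r n x y : ℕ) : ℕ × ℕ → Bool := fun q =>
  decide (sh t l r n q.1 q.2) && b (x + q.1) (y + q.2)

/-- All patterns. -/
def P (t l r n : ℕ) : Set (ℕ × ℕ → Bool) :=
  {p | ∃ x y, y ≤ x ∧ p = pat t l r n x y}

/-- Patterns with prescribed parity class. -/
def Q (t l r n ρ γ : ℕ) : Set (ℕ × ℕ → Bool) :=
  {p | ∃ x y, y ≤ x ∧ x % 2 = ρ ∧ y % 2 = γ ∧ p = pat t l r n x y}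

theorem pat_eq_iff {t l r n x y x' y' : ℕ} : pat t l r n x y = pat t l r n x' y' ↔
    ∀ k i, sh t l r n k i → b (x + k) (y + i) = b (x' + k) (y' + i) := by
  constructor
  · intro h k i hs
    have := congrFun h (k, i)
    simpa [pat, hs] using this
  · intro h
    funext q
    by_cases hs : sh t l r n q.1 q.2
    · simp [pat, hs, h _ _ hs]
    · simp [pat, hs]

theorem finite_P (t l r n : ℕ) : (P t l r n).Finite := by
  apply Set.Finite.subset (Set.finite_range (fun (f : Fin n × Fin n → Bool) (q : ℕ × ℕ) =>
    if h : q.1 < n ∧ q.2 < n then f (⟨q.1, h.1⟩, ⟨q.2, h.2⟩) else false))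
  rintro p ⟨x, y, -, rfl⟩
  refine ⟨fun z => pat t l r n x y (z.1, z.2), ?_⟩
  funext q
  by_cases h : q.1 < n ∧ q.2 < n
  · simp [h]
  · have : ¬ sh t l r n q.1 q.2 := by unfold sh; omega
    simp [h, pat, this]

theorem Q_sub_P (t l r n ρ γ : ℕ) : Q t l r n ρ γ ⊆ P t l r n := by
  rintro p ⟨x, y, h, -, -, rfl⟩; exact ⟨x, y, h, rfl⟩

theorem P_eq_union (t l r n : ℕ) :
    P t l r n = Q t l r n 0 0 ∪ Q t l r n 0 1 ∪ Q t l r n 1 0 ∪ Q t l r n 1 1 := by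
  apply Set.Subset.antisymm
  · rintro p ⟨x, y, h, rfl⟩
    rcases Nat.mod_two_eq_zero_or_one x with hx | hx <;>
    rcases Nat.mod_two_eq_zero_or_one y with hy | hy
    · exact Or.inl (Or.inl (Or.inl ⟨x, y, h, hx, hy, rfl⟩))
    · exact Or.inl (Or.inl (Or.inr ⟨x, y, h, hx, hy, rfl⟩))
    · exact Or.inl (Or.inr ⟨x, y, h, hx, hy, rfl⟩)
    · exact Or.inr ⟨x, y, h, hx, hy, rfl⟩
  · refine Set.union_subset (Set.union_subset (Set.union_subset ?_ ?_) ?_) ?_ <;>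
    apply Q_sub_P

theorem ncard_image_congr {α β γ : Type*} (A : Set α) (f : α → β) (g : α → γ)
    (h : ∀ x ∈ A, ∀ y ∈ A, f x = f y ↔ g x = g y) : (f '' A).ncard = (g '' A).ncard := by
  classical
  refine Set.ncard_congr (fun z hz => g hz.choose) ?_ ?_ ?_
  · intro z hz; exact ⟨_, hz.choose_spec.1, rfl⟩
  · intro z w hz hw e
    rw [← hz.choose_spec.2, ← hw.choose_spec.2]
    exact (h _ hz.choose_spec.1 _ hw.choose_spec.1).2 e
  · rintro _ ⟨x, hx, rfl⟩
    have hz : f x ∈ f '' A := ⟨x, hx, rfl⟩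
    exact ⟨f x, hz, (h _ hz.choose_spec.1 _ hx).1 hz.choose_spec.2⟩

/-- Positions. -/
def Pos : Set (ℕ × ℕ) := {z | z.2 ≤ z.1}

theorem P_image (t l r n : ℕ) : P t l r n = (fun z : ℕ × ℕ => pat t l r n z.1 z.2) '' Pos := by
  ext p; constructor
  · rintro ⟨x, y, h, rfl⟩; exact ⟨(x, y), h, rfl⟩
  · rintro ⟨⟨x, y⟩, h, rfl⟩; exact ⟨x, y, h, rfl⟩

theorem transfer {t l r n t' l' r' n' : ℕ} (dx dy : ℕ)
    (h1 : ∀ K I, sh t' l' r' n' K I → ∃ k i, sh t l r n k i ∧ (dx + k) / 2 = K ∧ (dy + i) / 2 = I ∧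
      ¬ ((dx + k) % 2 = 0 ∧ (dy + i) % 2 = 1))
    (h2 : ∀ k i, sh t l r n k i → ((dx + k) % 2 = 0 ∧ (dy + i) % 2 = 1) ∨
      sh t' l' r' n' ((dx + k) / 2) ((dy + i) / 2)) (X Y X' Y' : ℕ) :
    pat t l r n (2 * X + dx) (2 * Y + dy) = pat t l r n (2 * X' + dx) (2 * Y' + dy) ↔
    pat t' l' r' n' X Y = pat t' l' r' n' X' Y' := by
  rw [pat_eq_iff, pat_eq_iff]
  constructor
  · intro h K I hs
    obtain ⟨k, i, hk, rfl, rfl, hz⟩ := h1 K I hs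
    have := h k i hk
    rw [b_half (by omega), b_half (x := 2 * X' + dx + k) (by omega)] at this
    convert this using 2 <;> omega
  · intro h k i hs
    by_cases hz : (dx + k) % 2 = 0 ∧ (dy + i) % 2 = 1
    · rw [b_zero_kind (by omega) (by omega), b_zero_kind (by omega) (by omega)]
    · rcases h2 k i hs with h3 | h3
      · exact absurd h3 hz
      · have := h _ _ h3
        rw [b_half (by omega), b_half (x := 2 * X' + dx + k) (by omega)]
        convert this using 2 <;> omega

theorem ncard_Q {t l r n t' l' r' n' : ℕ} (dx dy ρ γ : ℕ)
    (hd : ∀ x y, x % 2 = ρ → y % 2 = γ → y ≤ x →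
      ∃ X Y, Y ≤ X ∧ x = 2 * X + dx ∧ y = 2 * Y + dy)
    (hd' : ∀ X Y, Y ≤ X → 2 * Y + dy ≤ 2 * X + dx ∧ (2 * X + dx) % 2 = ρ ∧ (2 * Y + dy) % 2 = γ)
    (h1 : ∀ K I, sh t' l' r' n' K I → ∃ k i, sh t l r n k i ∧ (dx + k) / 2 = K ∧ (dy + i) / 2 = I ∧
      ¬ ((dx + k) % 2 = 0 ∧ (dy + i) % 2 = 1))
    (h2 : ∀ k i, sh t l r n k i → ((dx + k) % 2 = 0 ∧ (dy + i) % 2 = 1) ∨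
      sh t' l' r' n' ((dx + k) / 2) ((dy + i) / 2)) :
    (Q t l r n ρ γ).ncard = (P t' l' r' n').ncard := by
  have e : Q t l r n ρ γ =
      (fun z : ℕ × ℕ => pat t l r n (2 * z.1 + dx) (2 * z.2 + dy)) '' Pos := by
    ext p; constructor
    · rintro ⟨x, y, h, hx, hy, rfl⟩
      obtain ⟨X, Y, hXY, rfl, rfl⟩ := hd x y hx hy h
      exact ⟨(X, Y), hXY, rfl⟩
    · rintro ⟨⟨X, Y⟩, h, rfl⟩
      obtain ⟨a1, a2, a3⟩ := hd' X Y h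
      exact ⟨_, _, a1, a2, a3, rfl⟩
  rw [e, P_image]
  apply ncard_image_congr
  intro z _ w _
  exact transfer dx dy h1 h2 _ _ _ _

theorem pos00 : ∀ x y, x % 2 = 0 → y % 2 = 0 → y ≤ x →
      ∃ X Y, Y ≤ X ∧ x = 2 * X + 0 ∧ y = 2 * Y + 0 := fun x y _ _ _ =>
  ⟨x / 2, y / 2, by omega, by omega, by omega⟩

theorem pos01 : ∀ x y, x % 2 = 0 → y % 2 = 1 → y ≤ x →
      ∃ X Y, Y ≤ X ∧ x = 2 * X + 2 ∧ y = 2 * Y + 1 := fun x y _ _ _ =>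
  ⟨x / 2 - 1, y / 2, by omega, by omega, by omega⟩

theorem pos10 : ∀ x y, x % 2 = 1 → y % 2 = 0 → y ≤ x →
      ∃ X Y, Y ≤ X ∧ x = 2 * X + 1 ∧ y = 2 * Y + 0 := fun x y _ _ _ =>
  ⟨x / 2, y / 2, by omega, by omega, by omega⟩

theorem pos11 : ∀ x y, x % 2 = 1 → y % 2 = 1 → y ≤ x →
      ∃ X Y, Y ≤ X ∧ x = 2 * X + 1 ∧ y = 2 * Y + 1 := fun x y _ _ _ =>
  ⟨x / 2, y / 2, by omega, by omega, by omega⟩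

/-- Three candidate fine cells above a coarse cell. -/
theorem cand {t l r n dx dy K I : ℕ}
    (h : (dx ≤ 2 * K ∧ dy ≤ 2 * I ∧ sh t l r n (2 * K - dx) (2 * I - dy)) ∨
      (dx ≤ 2 * K + 1 ∧ dy ≤ 2 * I ∧ sh t l r n (2 * K + 1 - dx) (2 * I - dy)) ∨
      (dx ≤ 2 * K + 1 ∧ dy ≤ 2 * I + 1 ∧ sh t l r n (2 * K + 1 - dx) (2 * I + 1 - dy))) :
    ∃ k i, sh t l r n k i ∧ (dx + k) / 2 = K ∧ (dy + i) / 2 = I ∧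
      ¬ ((dx + k) % 2 = 0 ∧ (dy + i) % 2 = 1) := by
  rcases h with ⟨a, c, d⟩ | ⟨a, c, d⟩ | ⟨a, c, d⟩ <;>
  exact ⟨_, _, d, by omega, by omega, by omega⟩

theorem even00 {t l r m : ℕ} (ht : t ≤ 1) (hl : l ≤ 1) (hr : r ≤ 1) (hm : 1 ≤ m)
    (h2 : 2 ≤ m) : (Q t l r (2 * m) 0 0).ncard = (P 0 0 0 m).ncard := by
  apply ncard_Q 0 0 0 0 pos00 (by omega)
  · intro K I hs
    apply cand
    unfold sh at *; omega
  · intro k i hs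
    unfold sh at *; omega

theorem even01 {t l r m : ℕ} (ht : t ≤ 1) (hl : l ≤ 1) (hr : r ≤ 1) (hm : 1 ≤ m)
    : (Q t l r (2 * m) 0 1).ncard = (P 1 l r (m + 1)).ncard := by
  apply ncard_Q 2 1 0 1 pos01 (by omega)
  · intro K I hs
    apply cand
    unfold sh at *; omega
  · intro k i hs
    unfold sh at *; omega

theorem even10 {t l r m : ℕ} (ht : t ≤ 1) (hl : l ≤ 1) (hr : r ≤ 1) (hm : 1 ≤ m)
    : (Q t l r (2 * m) 1 0).ncard = (P t l 1 (m + 1)).ncard := by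
  apply ncard_Q 1 0 1 0 pos10 (by omega)
  · intro K I hs
    apply cand
    unfold sh at *; omega
  · intro k i hs
    unfold sh at *; omega

theorem even11 {t l r m : ℕ} (ht : t ≤ 1) (hl : l ≤ 1) (hr : r ≤ 1) (hm : 1 ≤ m)
    : (Q t l r (2 * m) 1 1).ncard = (P t 1 r (m + 1)).ncard := by
  apply ncard_Q 1 1 1 1 pos11 (by omega)
  · intro K I hs
    apply cand
    unfold sh at *; omega
  · intro k i hs
    unfold sh at *; omega

theorem odd00 {t l r m : ℕ} (ht : t ≤ 1) (hl : l ≤ 1) (hr : r ≤ 1) (hm : 1 ≤ m)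
    : (Q t l r (2 * m + 1) 0 0).ncard = (P 0 l r (m + 1)).ncard := by
  apply ncard_Q 0 0 0 0 pos00 (by omega)
  · intro K I hs
    apply cand
    unfold sh at *; omega
  · intro k i hs
    unfold sh at *; omega

theorem odd01 {t l r m : ℕ} (ht : t ≤ 1) (hl : l ≤ 1) (hr : r ≤ 1) (hm : 1 ≤ m)
    : (Q t l r (2 * m + 1) 0 1).ncard = (P 1 1 1 (m + 2)).ncard := by
  apply ncard_Q 2 1 0 1 pos01 (by omega)
  · intro K I hs
    apply cand
    unfold sh at *; omega
  · intro k i hs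
    unfold sh at *; omega

theorem odd10 {t l r m : ℕ} (ht : t ≤ 1) (hl : l ≤ 1) (hr : r ≤ 1) (hm : 1 ≤ m)
    : (Q t l r (2 * m + 1) 1 0).ncard = (P t 0 r (m + 1)).ncard := by
  apply ncard_Q 1 0 1 0 pos10 (by omega)
  · intro K I hs
    apply cand
    unfold sh at *; omega
  · intro k i hs
    unfold sh at *; omega

theorem odd11 {t l r m : ℕ} (ht : t ≤ 1) (hl : l ≤ 1) (hr : r ≤ 1) (hm : 1 ≤ m)
    : (Q t l r (2 * m + 1) 1 1).ncard = (P t l 0 (m + 1)).ncard := by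
  apply ncard_Q 1 1 1 1 pos11 (by omega)
  · intro K I hs
    apply cand
    unfold sh at *; omega
  · intro k i hs
    unfold sh at *; omega


/-- Blank pattern. -/
def zp : ℕ × ℕ → Bool := fun _ => false

/-- Pattern of the top side. -/
def st (t l r n : ℕ) : ℕ × ℕ → Bool := fun q => decide (sh t l r n q.1 q.2 ∧ q.1 = t)

/-- Pattern of the left corner side. -/
def sl (t l r n : ℕ) : ℕ × ℕ → Bool := fun q => decide (sh t l r n q.1 q.2 ∧ q.1 + 1 + l = q.2 + n)

/-- Pattern of the right corner side. -/
def sr (t l r n : ℕ) : ℕ × ℕ → Bool := fun q => decide (sh t l r n q.1 q.2 ∧ q.2 + 1 + r = n)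

theorem exists_pow (n : ℕ) : ∃ N, 4 * n + 8 ≤ 2 ^ N ∧ 2 ^ N % 2 = 0 := by
  refine ⟨4 * n + 8, Nat.lt_two_pow_self.le, ?_⟩
  rw [show 4 * n + 8 = (4 * n + 7) + 1 by ring, pow_succ]; omega

theorem b20 : b 2 0 = true := by decide
theorem b21 : b 2 1 = false := by decide
theorem b22 : b 2 2 = true := by decide
theorem b31 : b 3 1 = true := by decide
theorem b32 : b 3 2 = true := by decide

theorem mem_of {t l r n ρ γ : ℕ} (p : ℕ × ℕ → Bool) (s : ℕ → ℕ → Prop)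
    (hp : ∀ k i, p (k, i) = true ↔ sh t l r n k i ∧ s k i)
    (x y : ℕ) (hyx : y ≤ x) (hx : x % 2 = ρ) (hy : y % 2 = γ)
    (h1 : ∀ k i, sh t l r n k i → s k i → b (x + k) (y + i) = true)
    (h0 : ∀ k i, sh t l r n k i → ¬ s k i → b (x + k) (y + i) = false) :
    p ∈ Q t l r n ρ γ := by
  refine ⟨x, y, hyx, hx, hy, ?_⟩
  funext ⟨k, i⟩
  rw [Bool.eq_iff_iff, hp]
  by_cases hs : sh t l r n k i
  · by_cases hh : s k i
    · simp [pat, hs, hh, h1 k i hs hh]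
    · simp [pat, hs, hh, h0 k i hs hh]
  · simp [pat, hs]

theorem zp_mem (t l r n ρ γ : ℕ) (hρ : ρ < 2) (hγ : γ < 2) : zp ∈ Q t l r n ρ γ := by
  obtain ⟨N, hN, hN2⟩ := exists_pow n
  apply mem_of zp (fun _ _ => False) (by simp [zp]) (2 * 2 ^ N + ρ) (2 ^ N + γ) (by omega) (by omega)
    (by omega) (by simp)
  intro k i hs _
  unfold sh at hs
  rw [b_blk 2 1 (ρ + k) (γ + i) (N := N) (by omega) (by omega) (by omega) (by omega), b21]
  rfl

theorem st_mem {t l r n : ℕ} (ht : t ≤ 1) (hl : l ≤ 1) (hr : r ≤ 1) (hn : 3 ≤ n)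
    (γ : ℕ) (hγ : γ < 2) : st t l r n ∈ Q t l r n (1 - t) γ := by
  obtain ⟨N, hN, hN2⟩ := exists_pow n
  apply mem_of (st t l r n) (fun k _ => k = t) (by simp [st]) (2 ^ N - 1 - t) (2 * n + γ)
    (by omega) (by omega) (by omega)
  · intro k i hs h
    unfold sh at hs
    rw [show 2 ^ N - 1 - t + k = 2 ^ N - 1 by omega]
    exact b_full N _ (by omega)
  · intro k i hs h
    unfold sh at hs
    rw [b_blk 1 0 (k - 1 - t) (2 * n + γ + i) (N := N) (by omega) (by omega) (by omega) (by omega),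
      b_lt (x := k - 1 - t) (by omega)]
    simp

theorem sl_mem0 {t l r n : ℕ} (ht : t ≤ 1) (hl : l ≤ 1) (hr : r ≤ 1) (hn : 3 ≤ n)
    : sl t l r n ∈ Q t l r n ((n + l + 1) % 2) 0 := by
  obtain ⟨N, hN, hN2⟩ := exists_pow n
  apply mem_of (sl t l r n) (fun k i => k + 1 + l = i + n) (by simp [sl])
    (3 * 2 ^ N + 1 + l - n) (2 ^ N) (by omega) (by omega) (by omega)
  · intro k i hs h
    unfold sh at hs
    rw [b_blk 3 1 i i (N := N) (by omega) (by omega) (by omega) (by omega), b31, b_self]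
    rfl
  · intro k i hs h
    unfold sh at hs
    by_cases h2 : k + 1 + l < n
    · rw [b_blk 2 1 (2 ^ N + k + 1 + l - n) i (N := N) (by omega) (by omega) (by omega) (by omega),
        b21]
      rfl
    · rw [b_blk 3 1 (k + 1 + l - n) i (N := N) (by omega) (by omega) (by omega) (by omega),
        b_lt (x := k + 1 + l - n) (by omega)]
      simp

theorem sl_mem1 {t l r n : ℕ} (ht : t ≤ 1) (hl : l ≤ 1) (hr : r ≤ 1) (hn : 3 ≤ n)
    : sl t l r n ∈ Q t l r n ((n + l) % 2) 1 := by
  obtain ⟨N, hN, hN2⟩ := exists_pow n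
  apply mem_of (sl t l r n) (fun k i => k + 1 + l = i + n) (by simp [sl])
    (3 * 2 ^ N + l - n) (2 ^ N - 1) (by omega) (by omega) (by omega)
  · intro k i hs h
    unfold sh at hs
    by_cases hi : i = 0
    · rw [b_blk 2 0 (2 ^ N - 1) (2 ^ N - 1) (N := N) (by omega) (by omega) (by omega) (by omega),
        b20, b_self]
      rfl
    · rw [b_blk 3 1 0 0 (N := N) (by omega) (by omega) (by omega) (by omega), b31, b_self]
      rfl
  · intro k i hs h
    unfold sh at hs
    by_cases h2 : k + l < n
    · by_cases hi : i = 0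
      · rw [b_blk 2 0 (2 ^ N + k + l - n) (2 ^ N - 1) (N := N) (by omega) (by omega) (by omega)
          (by omega), b_lt (x := 2 ^ N + k + l - n) (by omega)]
        simp
      · rw [b_blk 2 1 (2 ^ N + k + l - n) (i - 1) (N := N) (by omega) (by omega) (by omega)
          (by omega), b21]
        rfl
    · rw [b_blk 3 1 0 (i - 1) (N := N) (by omega) (by omega) (by omega)
          (by omega), b_lt (x := 0) (by omega)]
      simp

theorem sr_mem0 {t l r n : ℕ} (ht : t ≤ 1) (hl : l ≤ 1) (hr : r ≤ 1) (hn : 3 ≤ n)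
    : sr t l r n ∈ Q t l r n ((n + r + 1) % 2) ((n + r + 1) % 2) := by
  obtain ⟨N, hN, hN2⟩ := exists_pow n
  apply mem_of (sr t l r n) (fun k i => i + 1 + r = n) (by simp [sr])
    (3 * 2 ^ N + 1 + r - n) (2 * 2 ^ N + 1 + r - n) (by omega) (by omega) (by omega)
  · intro k i hs h
    unfold sh at hs
    rw [b_blk 3 2 (k + 1 + r - n) 0 (N := N) (by omega) (by omega) (by omega) (by omega), b32,
      b_zero_right]
    rfl
  · intro k i hs h
    unfold sh at hs
    by_cases h2 : k + 1 + r < n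
    · rw [b_blk 2 1 (2 ^ N + k + 1 + r - n) (2 ^ N + i + 1 + r - n) (N := N) (by omega) (by omega)
        (by omega) (by omega), b21]
      rfl
    · rw [b_blk 3 1 (k + 1 + r - n) (2 ^ N + i + 1 + r - n) (N := N) (by omega) (by omega)
        (by omega) (by omega), b_lt (x := k + 1 + r - n) (by omega)]
      simp

theorem sr_mem1 {t l r n : ℕ} (ht : t ≤ 1) (hl : l ≤ 1) (hr : r ≤ 1) (hn : 3 ≤ n)
    : sr t l r n ∈ Q t l r n ((n + r) % 2) ((n + r + 1) % 2) := by
  obtain ⟨N, hN, hN2⟩ := exists_pow n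
  apply mem_of (sr t l r n) (fun k i => i + 1 + r = n) (by simp [sr])
    (3 * 2 ^ N + r - n) (2 * 2 ^ N + 1 + r - n) (by omega) (by omega) (by omega)
  · intro k i hs h
    unfold sh at hs
    by_cases h2 : k + r < n
    · rw [b_blk 2 2 (2 ^ N + k + r - n) 0 (N := N) (by omega) (by omega) (by omega) (by omega), b22,
        b_zero_right]
      rfl
    · rw [b_blk 3 2 0 0 (N := N) (by omega) (by omega) (by omega) (by omega), b32,
        b_zero_right]
      rfl
  · intro k i hs h
    unfold sh at hs
    by_cases h2 : k + r < n
    · rw [b_blk 2 1 (2 ^ N + k + r - n) (2 ^ N + i + 1 + r - n) (N := N) (by omega) (by omega)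
        (by omega) (by omega), b21]
      rfl
    · rw [b_blk 3 1 (k + r - n) (2 ^ N + i + 1 + r - n) (N := N) (by omega) (by omega)
        (by omega) (by omega), b_lt (x := k + r - n) (by omega)]
      simp

theorem st_iff {t l r n : ℕ} (ht : t ≤ 1) (hl : l ≤ 1) (hr : r ≤ 1) (hn : 3 ≤ n)
    (k i : ℕ) : st t l r n (k, i) = true ↔ sh t l r n k i ∧ k = t := by simp [st]
theorem sl_iff {t l r n : ℕ} (ht : t ≤ 1) (hl : l ≤ 1) (hr : r ≤ 1) (hn : 3 ≤ n)
    (k i : ℕ) : sl t l r n (k, i) = true ↔ sh t l r n k i ∧ k + 1 + l = i + n := by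
  simp [sl]
theorem sr_iff {t l r n : ℕ} (ht : t ≤ 1) (hl : l ≤ 1) (hr : r ≤ 1) (hn : 3 ≤ n)
    (k i : ℕ) : sr t l r n (k, i) = true ↔ sh t l r n k i ∧ i + 1 + r = n := by
  simp [sr]

theorem distinct {t l r n : ℕ} (ht : t ≤ 1) (hl : l ≤ 1) (hr : r ≤ 1) (hn : 3 ≤ n)
    : zp ≠ st t l r n ∧ zp ≠ sl t l r n ∧ zp ≠ sr t l r n ∧
    st t l r n ≠ sl t l r n ∧ st t l r n ≠ sr t l r n ∧ sl t l r n ≠ sr t l r n := by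
  have h1 : st t l r n (t, 0) = true := by
    rw [st_iff ht hl hr hn]; unfold sh; omega
  have h2 : sl t l r n (n - 1, l) = true := by
    rw [sl_iff ht hl hr hn]; unfold sh; omega
  have h3 : sr t l r n (n - 1, n - 1 - r) = true := by
    rw [sr_iff ht hl hr hn]; unfold sh; omega
  have h4 : sl t l r n (n - 1 - l, 0) = true := by
    rw [sl_iff ht hl hr hn]; unfold sh; omega
  refine ⟨?_, ?_, ?_, ?_, ?_, ?_⟩ <;> intro h
  · rw [← h] at h1; simp [zp] at h1
  · rw [← h] at h2; simp [zp] at h2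
  · rw [← h] at h3; simp [zp] at h3
  · rw [← h, st_iff ht hl hr hn] at h2; omega
  · rw [← h, st_iff ht hl hr hn] at h3; omega
  · rw [h, sr_iff ht hl hr hn] at h4; omega


theorem kill {t l r n x y x' y' k i : ℕ}
    (h : ∀ k i, sh t l r n k i → b (x + k) (y + i) = b (x' + k) (y' + i))
    (ht : b (x + k) (y + i) = true) (k2 i2 : ℕ) (hs2 : sh t l r n k2 i2)
    (e1 : (x + k2) / 2 = (x + k) / 2) (e2 : (y + i2) / 2 = (y + i) / 2)
    (nz : ¬ ((x + k2) % 2 = 0 ∧ (y + i2) % 2 = 1))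
    (z : (x' + k2) % 2 = 0 ∧ (y' + i2) % 2 = 1) : False := by
  have h2 := h k2 i2 hs2
  rw [b_zero_kind z.1 z.2, b_half nz, e1, e2] at h2
  rw [b_step] at ht
  split_ifs at ht
  rw [h2] at ht; exact absurd ht (by simp)

theorem inter_eq {t l r n ρ γ ρ' γ' : ℕ} (D : Prop) [Decidable D] (s : ℕ → ℕ → Prop)
    (p : ℕ × ℕ → Bool) (hp : ∀ k i, p (k, i) = true ↔ sh t l r n k i ∧ s k i)
    (hz : zp ∈ Q t l r n ρ γ) (hz' : zp ∈ Q t l r n ρ' γ')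
    (hm : D → p ∈ Q t l r n ρ γ) (hm' : D → p ∈ Q t l r n ρ' γ')
    (hk : ∀ x y x' y' k i, x % 2 = ρ → y % 2 = γ → x' % 2 = ρ' → y' % 2 = γ' → sh t l r n k i →
      (∀ k2 i2, ¬ (sh t l r n k2 i2 ∧ (x + k2) / 2 = (x + k) / 2 ∧
        (y + i2) / 2 = (y + i) / 2 ∧ ¬ ((x + k2) % 2 = 0 ∧ (y + i2) % 2 = 1) ∧
        ((x' + k2) % 2 = 0 ∧ (y' + i2) % 2 = 1))) →
      (∀ k2 i2, ¬ (sh t l r n k2 i2 ∧ (x' + k2) / 2 = (x' + k) / 2 ∧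
        (y' + i2) / 2 = (y' + i) / 2 ∧ ¬ ((x' + k2) % 2 = 0 ∧ (y' + i2) % 2 = 1) ∧
        ((x + k2) % 2 = 0 ∧ (y + i2) % 2 = 1))) →
      ¬ ((x + k) % 2 = 0 ∧ (y + i) % 2 = 1) → ¬ ((x' + k) % 2 = 0 ∧ (y' + i) % 2 = 1) →
      D ∧ s k i)
    (hq : ∀ x y k i k2 i2, x % 2 = ρ → y % 2 = γ → D → sh t l r n k i → s k i →
      sh t l r n k2 i2 → s k2 i2 → (x + k2) / 2 = (x + k) / 2 ∧ (y + i2) / 2 = (y + i) / 2 ∧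
        ¬ ((x + k2) % 2 = 0 ∧ (y + i2) % 2 = 1)) :
    Q t l r n ρ γ ∩ Q t l r n ρ' γ' = if D then {zp, p} else {zp} := by
  apply Set.Subset.antisymm
  · rintro q ⟨⟨x, y, hxy, hx, hy, rfl⟩, ⟨x', y', hxy', hx', hy', he⟩⟩
    rw [pat_eq_iff] at he
    have key : ∀ k i, sh t l r n k i → b (x + k) (y + i) = true → D ∧ s k i := by
      intro k i hs hb
      have hb' := hb
      rw [he k i hs] at hb'
      apply hk x y x' y' k i hx hy hx' hy' hs
      · exact fun k2 i2 ⟨a1, a2, a3, a4, a5⟩ => kill he hb k2 i2 a1 a2 a3 a4 a5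
      · exact fun k2 i2 ⟨a1, a2, a3, a4, a5⟩ => kill (fun k i hs => (he k i hs).symm) hb' k2 i2 a1 a2 a3 a4 a5
      · intro z; rw [b_zero_kind z.1 z.2] at hb; exact absurd hb (by simp)
      · intro z; rw [b_zero_kind z.1 z.2] at hb'; exact absurd hb' (by simp)
    by_cases hbl : ∀ k i, sh t l r n k i → b (x + k) (y + i) = false
    · have : pat t l r n x y = zp := by
        funext q
        by_cases hs : sh t l r n q.1 q.2
        · simp [pat, zp, hs, hbl _ _ hs]
        · simp [pat, zp, hs]
      rw [this]; split_ifs <;> simp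
    · push Not at hbl
      obtain ⟨k, i, hs, hb⟩ := hbl
      have hb : b (x + k) (y + i) = true := by simpa using hb
      obtain ⟨hD, hsk⟩ := key k i hs hb
      have : pat t l r n x y = p := by
        funext ⟨k2, i2⟩
        rw [Bool.eq_iff_iff, hp]
        constructor
        · intro hh
          simp only [pat, Bool.and_eq_true, decide_eq_true_eq] at hh
          exact ⟨hh.1, (key _ _ hh.1 hh.2).2⟩
        · rintro ⟨hs2, hsk2⟩
          obtain ⟨a1, a2, a3⟩ := hq x y k i k2 i2 hx hy hD hs hsk hs2 hsk2
          obtain ⟨c1, c2, c3⟩ := hq x y k i k i hx hy hD hs hsk hs hsk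
          simp only [pat, Bool.and_eq_true, decide_eq_true_eq]
          refine ⟨hs2, ?_⟩
          rw [b_half a3, a1, a2, ← b_half c3, hb]
      rw [this, if_pos hD]; simp
  · split_ifs with hD
    · rintro q (rfl | rfl)
      · exact ⟨hz, hz'⟩
      · exact ⟨hm hD, hm' hD⟩
    · rintro q rfl
      exact ⟨hz, hz'⟩

theorem Q_congr {t l r n ρ γ ρ' γ' : ℕ} {p : ℕ × ℕ → Bool} (h : p ∈ Q t l r n ρ γ)
    (h1 : ρ = ρ') (h2 : γ = γ') : p ∈ Q t l r n ρ' γ' := by subst h1 h2; exact h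

theorem i_10_11 {t l r n : ℕ} (ht : t ≤ 1) (hl : l ≤ 1) (hr : r ≤ 1) (hn : 3 ≤ n)
    : Q t l r n 1 0 ∩ Q t l r n 1 1 = if t = 0 then {zp, st t l r n} else {zp} := by
  apply inter_eq (t = 0) (fun k _ => k = t) (st t l r n) (st_iff ht hl hr hn)
    (zp_mem _ _ _ _ _ _ (by omega) (by omega)) (zp_mem _ _ _ _ _ _ (by omega) (by omega))
  · intro h; exact Q_congr (st_mem ht hl hr hn 0 (by omega)) (by omega) (by omega)
  · intro h; exact Q_congr (st_mem ht hl hr hn 1 (by omega)) (by omega) (by omega)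
  · intro x y x' y' k i hx hy hx' hy' hs h1 h2 n1 n2
    rcases Nat.mod_two_eq_zero_or_one k with hk | hk <;>
    rcases Nat.mod_two_eq_zero_or_one i with hi | hi
    · have a1 : ¬ (1 ≤ k ∧ sh t l r n (k - 1) i) := fun ⟨_, h⟩ =>
        h1 (k - 1) i ⟨h, by omega, by omega, by omega, by omega⟩
      have a2 : ¬ (1 ≤ k ∧ 1 ≤ i ∧ sh t l r n (k - 1) (i - 1)) := fun ⟨_, _, h⟩ =>
        h2 (k - 1) (i - 1) ⟨h, by omega, by omega, by omega, by omega⟩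
      clear h1 h2 n1 n2
      unfold sh at *
      beta_reduce
      omega
    · have a1 : ¬ (1 ≤ k ∧ 1 ≤ i ∧ sh t l r n (k - 1) (i - 1)) := fun ⟨_, _, h⟩ =>
        h1 (k - 1) (i - 1) ⟨h, by omega, by omega, by omega, by omega⟩
      have a2 : ¬ (1 ≤ k ∧ sh t l r n (k - 1) i) := fun ⟨_, h⟩ =>
        h2 (k - 1) i ⟨h, by omega, by omega, by omega, by omega⟩
      clear h1 h2 n1 n2
      unfold sh at *
      beta_reduce
      omega
    · exact absurd ⟨by omega, by omega⟩ n2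
    · exact absurd ⟨by omega, by omega⟩ n1
  · intro x y k i k2 i2 hx hy hD hs hsk hs2 hsk2
    unfold sh at *
    beta_reduce at *
    omega

theorem i_00_01 {t l r n : ℕ} (ht : t ≤ 1) (hl : l ≤ 1) (hr : r ≤ 1) (hn : 3 ≤ n)
    : Q t l r n 0 0 ∩ Q t l r n 0 1 = if ¬ t = 0 then {zp, st t l r n} else {zp} := by
  apply inter_eq (¬ t = 0) (fun k _ => k = t) (st t l r n) (st_iff ht hl hr hn)
    (zp_mem _ _ _ _ _ _ (by omega) (by omega)) (zp_mem _ _ _ _ _ _ (by omega) (by omega))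
  · intro h; exact Q_congr (st_mem ht hl hr hn 0 (by omega)) (by omega) (by omega)
  · intro h; exact Q_congr (st_mem ht hl hr hn 1 (by omega)) (by omega) (by omega)
  · intro x y x' y' k i hx hy hx' hy' hs h1 h2 n1 n2
    rcases Nat.mod_two_eq_zero_or_one k with hk | hk <;>
    rcases Nat.mod_two_eq_zero_or_one i with hi | hi
    · exact absurd ⟨by omega, by omega⟩ n2
    · exact absurd ⟨by omega, by omega⟩ n1
    · have a1 : ¬ (1 ≤ k ∧ sh t l r n (k - 1) i) := fun ⟨_, h⟩ =>
        h1 (k - 1) i ⟨h, by omega, by omega, by omega, by omega⟩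
      have a2 : ¬ (1 ≤ k ∧ 1 ≤ i ∧ sh t l r n (k - 1) (i - 1)) := fun ⟨_, _, h⟩ =>
        h2 (k - 1) (i - 1) ⟨h, by omega, by omega, by omega, by omega⟩
      clear h1 h2 n1 n2
      unfold sh at *
      beta_reduce
      omega
    · have a1 : ¬ (1 ≤ k ∧ 1 ≤ i ∧ sh t l r n (k - 1) (i - 1)) := fun ⟨_, _, h⟩ =>
        h1 (k - 1) (i - 1) ⟨h, by omega, by omega, by omega, by omega⟩
      have a2 : ¬ (1 ≤ k ∧ sh t l r n (k - 1) i) := fun ⟨_, h⟩ =>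
        h2 (k - 1) i ⟨h, by omega, by omega, by omega, by omega⟩
      clear h1 h2 n1 n2
      unfold sh at *
      beta_reduce
      omega
  · intro x y k i k2 i2 hx hy hD hs hsk hs2 hsk2
    unfold sh at *
    beta_reduce at *
    omega

theorem i_10_01 {t l r n : ℕ} (ht : t ≤ 1) (hl : l ≤ 1) (hr : r ≤ 1) (hn : 3 ≤ n)
    : Q t l r n 1 0 ∩ Q t l r n 0 1 = if (n + l) % 2 = 0 then {zp, sl t l r n} else {zp} := by
  apply inter_eq ((n + l) % 2 = 0) (fun k i => k + 1 + l = i + n) (sl t l r n) (sl_iff ht hl hr hn)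
    (zp_mem _ _ _ _ _ _ (by omega) (by omega)) (zp_mem _ _ _ _ _ _ (by omega) (by omega))
  · intro h; exact Q_congr (sl_mem0 ht hl hr hn) (by omega) (by omega)
  · intro h; exact Q_congr (sl_mem1 ht hl hr hn) (by omega) (by omega)
  · intro x y x' y' k i hx hy hx' hy' hs h1 h2 n1 n2
    rcases Nat.mod_two_eq_zero_or_one k with hk | hk <;>
    rcases Nat.mod_two_eq_zero_or_one i with hi | hi
    · exact absurd ⟨by omega, by omega⟩ n2
    · have a1 : ¬ (1 ≤ i ∧ sh t l r n k (i - 1)) := fun ⟨_, h⟩ =>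
        h1 k (i - 1) ⟨h, by omega, by omega, by omega, by omega⟩
      have a2 : ¬ (sh t l r n (k + 1) i) := fun h =>
        h2 (k + 1) i ⟨h, by omega, by omega, by omega, by omega⟩
      clear h1 h2 n1 n2
      unfold sh at *
      beta_reduce
      omega
    · have a1 : ¬ (sh t l r n (k + 1) i) := fun h =>
        h1 (k + 1) i ⟨h, by omega, by omega, by omega, by omega⟩
      have a2 : ¬ (1 ≤ i ∧ sh t l r n k (i - 1)) := fun ⟨_, h⟩ =>
        h2 k (i - 1) ⟨h, by omega, by omega, by omega, by omega⟩
      clear h1 h2 n1 n2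
      unfold sh at *
      beta_reduce
      omega
    · exact absurd ⟨by omega, by omega⟩ n1
  · intro x y k i k2 i2 hx hy hD hs hsk hs2 hsk2
    unfold sh at *
    beta_reduce at *
    omega

theorem i_00_11 {t l r n : ℕ} (ht : t ≤ 1) (hl : l ≤ 1) (hr : r ≤ 1) (hn : 3 ≤ n)
    : Q t l r n 0 0 ∩ Q t l r n 1 1 = if ¬ (n + l) % 2 = 0 then {zp, sl t l r n} else {zp} := by
  apply inter_eq (¬ (n + l) % 2 = 0) (fun k i => k + 1 + l = i + n) (sl t l r n) (sl_iff ht hl hr hn)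
    (zp_mem _ _ _ _ _ _ (by omega) (by omega)) (zp_mem _ _ _ _ _ _ (by omega) (by omega))
  · intro h; exact Q_congr (sl_mem0 ht hl hr hn) (by omega) (by omega)
  · intro h; exact Q_congr (sl_mem1 ht hl hr hn) (by omega) (by omega)
  · intro x y x' y' k i hx hy hx' hy' hs h1 h2 n1 n2
    rcases Nat.mod_two_eq_zero_or_one k with hk | hk <;>
    rcases Nat.mod_two_eq_zero_or_one i with hi | hi
    · have a1 : ¬ (sh t l r n (k + 1) i) := fun h =>
        h1 (k + 1) i ⟨h, by omega, by omega, by omega, by omega⟩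
      have a2 : ¬ (1 ≤ i ∧ sh t l r n k (i - 1)) := fun ⟨_, h⟩ =>
        h2 k (i - 1) ⟨h, by omega, by omega, by omega, by omega⟩
      clear h1 h2 n1 n2
      unfold sh at *
      beta_reduce
      omega
    · exact absurd ⟨by omega, by omega⟩ n1
    · exact absurd ⟨by omega, by omega⟩ n2
    · have a1 : ¬ (1 ≤ i ∧ sh t l r n k (i - 1)) := fun ⟨_, h⟩ =>
        h1 k (i - 1) ⟨h, by omega, by omega, by omega, by omega⟩
      have a2 : ¬ (sh t l r n (k + 1) i) := fun h =>
        h2 (k + 1) i ⟨h, by omega, by omega, by omega, by omega⟩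
      clear h1 h2 n1 n2
      unfold sh at *
      beta_reduce
      omega
  · intro x y k i k2 i2 hx hy hD hs hsk hs2 hsk2
    unfold sh at *
    beta_reduce at *
    omega

theorem i_11_01 {t l r n : ℕ} (ht : t ≤ 1) (hl : l ≤ 1) (hr : r ≤ 1) (hn : 3 ≤ n)
    : Q t l r n 1 1 ∩ Q t l r n 0 1 = if (n + r) % 2 = 0 then {zp, sr t l r n} else {zp} := by
  apply inter_eq ((n + r) % 2 = 0) (fun _ i => i + 1 + r = n) (sr t l r n) (sr_iff ht hl hr hn)
    (zp_mem _ _ _ _ _ _ (by omega) (by omega)) (zp_mem _ _ _ _ _ _ (by omega) (by omega))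
  · intro h; exact Q_congr (sr_mem0 ht hl hr hn) (by omega) (by omega)
  · intro h; exact Q_congr (sr_mem1 ht hl hr hn) (by omega) (by omega)
  · intro x y x' y' k i hx hy hx' hy' hs h1 h2 n1 n2
    rcases Nat.mod_two_eq_zero_or_one k with hk | hk <;>
    rcases Nat.mod_two_eq_zero_or_one i with hi | hi
    · exact absurd ⟨by omega, by omega⟩ n2
    · have a1 : ¬ (sh t l r n k (i + 1)) := fun h =>
        h1 k (i + 1) ⟨h, by omega, by omega, by omega, by omega⟩
      have a2 : ¬ (sh t l r n (k + 1) (i + 1)) := fun h =>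
        h2 (k + 1) (i + 1) ⟨h, by omega, by omega, by omega, by omega⟩
      clear h1 h2 n1 n2
      unfold sh at *
      beta_reduce
      omega
    · exact absurd ⟨by omega, by omega⟩ n1
    · have a1 : ¬ (sh t l r n (k + 1) (i + 1)) := fun h =>
        h1 (k + 1) (i + 1) ⟨h, by omega, by omega, by omega, by omega⟩
      have a2 : ¬ (sh t l r n k (i + 1)) := fun h =>
        h2 k (i + 1) ⟨h, by omega, by omega, by omega, by omega⟩
      clear h1 h2 n1 n2
      unfold sh at *
      beta_reduce
      omega
  · intro x y k i k2 i2 hx hy hD hs hsk hs2 hsk2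
    unfold sh at *
    beta_reduce at *
    omega

theorem i_00_10 {t l r n : ℕ} (ht : t ≤ 1) (hl : l ≤ 1) (hr : r ≤ 1) (hn : 3 ≤ n)
    : Q t l r n 0 0 ∩ Q t l r n 1 0 = if ¬ (n + r) % 2 = 0 then {zp, sr t l r n} else {zp} := by
  apply inter_eq (¬ (n + r) % 2 = 0) (fun _ i => i + 1 + r = n) (sr t l r n) (sr_iff ht hl hr hn)
    (zp_mem _ _ _ _ _ _ (by omega) (by omega)) (zp_mem _ _ _ _ _ _ (by omega) (by omega))
  · intro h; exact Q_congr (sr_mem0 ht hl hr hn) (by omega) (by omega)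
  · intro h; exact Q_congr (sr_mem1 ht hl hr hn) (by omega) (by omega)
  · intro x y x' y' k i hx hy hx' hy' hs h1 h2 n1 n2
    rcases Nat.mod_two_eq_zero_or_one k with hk | hk <;>
    rcases Nat.mod_two_eq_zero_or_one i with hi | hi
    · have a1 : ¬ (sh t l r n (k + 1) (i + 1)) := fun h =>
        h1 (k + 1) (i + 1) ⟨h, by omega, by omega, by omega, by omega⟩
      have a2 : ¬ (sh t l r n k (i + 1)) := fun h =>
        h2 k (i + 1) ⟨h, by omega, by omega, by omega, by omega⟩
      clear h1 h2 n1 n2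
      unfold sh at *
      beta_reduce
      omega
    · exact absurd ⟨by omega, by omega⟩ n1
    · have a1 : ¬ (sh t l r n k (i + 1)) := fun h =>
        h1 k (i + 1) ⟨h, by omega, by omega, by omega, by omega⟩
      have a2 : ¬ (sh t l r n (k + 1) (i + 1)) := fun h =>
        h2 (k + 1) (i + 1) ⟨h, by omega, by omega, by omega, by omega⟩
      clear h1 h2 n1 n2
      unfold sh at *
      beta_reduce
      omega
    · exact absurd ⟨by omega, by omega⟩ n2
  · intro x y k i k2 i2 hx hy hD hs hsk hs2 hsk2
    unfold sh at *
    beta_reduce at *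
    omega

theorem union_count {α : Type*} (A B C D : Set α) (z u v w : α) (p1 p2 p3 : Prop)
    [Decidable p1] [Decidable p2] [Decidable p3]
    (fA : A.Finite) (fB : B.Finite) (fC : C.Finite) (fD : D.Finite)
    (hd : z ≠ u ∧ z ≠ v ∧ z ≠ w ∧ u ≠ v ∧ u ≠ w ∧ v ≠ w)
    (hCD : C ∩ D = if p1 then {z, u} else {z}) (hAB : A ∩ B = if ¬ p1 then {z, u} else {z})
    (hCB : C ∩ B = if p2 then {z, v} else {z}) (hAD : A ∩ D = if ¬ p2 then {z, v} else {z})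
    (hDB : D ∩ B = if p3 then {z, w} else {z}) (hAC : A ∩ C = if ¬ p3 then {z, w} else {z}) :
    (A ∪ B ∪ C ∪ D).ncard + 6 = A.ncard + B.ncard + C.ncard + D.ncard := by
  classical
  obtain ⟨d1, d2, d3, d4, d5, d6⟩ := hd
  have h1 := Set.ncard_union_add_ncard_inter A B fA fB
  have h2 := Set.ncard_union_add_ncard_inter (A ∪ B) C (fA.union fB) fC
  have h3 := Set.ncard_union_add_ncard_inter (A ∪ B ∪ C) D ((fA.union fB).union fC) fD
  rw [Set.union_inter_distrib_right] at h2
  rw [Set.union_inter_distrib_right, Set.union_inter_distrib_right] at h3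
  rw [Set.inter_comm B C] at h2
  rw [Set.inter_comm B D] at h3
  rw [hAB] at h1
  rw [hAC, hCB] at h2
  rw [hAD, hDB, hCD] at h3
  have key : ∀ s : Finset α, (s : Set α).ncard = s.card := Set.ncard_coe_finset
  have e1 : ({z} : Set α) = (({z} : Finset α) : Set α) := by simp
  have e2 : ∀ a, ({z, a} : Set α) = (({z, a} : Finset α) : Set α) := by simp
  simp only [e1, e2, ← Finset.coe_union, ← apply_ite (fun s : Finset α => (s : Set α)), key] at h1 h2 h3
  have c1 : (({z} : Finset α)).card = 1 := by simp
  by_cases q1 : p1 <;> by_cases q2 : p2 <;> by_cases q3 : p3 <;>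
  simp [q1, q2, q3, Finset.card_insert_of_notMem, Finset.insert_union, d1, d2, d3, d4, d5, d6, d1.symm, d2.symm, d3.symm, d4.symm, d5.symm, d6.symm] at h1 h2 h3 <;> omega

theorem total {t l r n : ℕ} (ht : t ≤ 1) (hl : l ≤ 1) (hr : r ≤ 1) (hn : 3 ≤ n) :
    (P t l r n).ncard + 6 = (Q t l r n 0 0).ncard + (Q t l r n 0 1).ncard +
      (Q t l r n 1 0).ncard + (Q t l r n 1 1).ncard := by
  have hf : ∀ ρ γ, (Q t l r n ρ γ).Finite := fun ρ γ => (finite_P t l r n).subset (Q_sub_P ..)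
  rw [P_eq_union]
  exact union_count _ _ _ _ zp (st t l r n) (sl t l r n) (sr t l r n) _ _ _
    (hf _ _) (hf _ _) (hf _ _) (hf _ _) (distinct ht hl hr hn)
    (i_10_11 ht hl hr hn) (i_00_01 ht hl hr hn) (i_10_01 ht hl hr hn) (i_00_11 ht hl hr hn)
    (i_11_01 ht hl hr hn) (i_00_10 ht hl hr hn)

/-- A finite set of test positions. -/
def F : Finset (ℕ × ℕ) := ((Finset.range 6) ×ˢ (Finset.range 6)).filter (fun z => z.2 ≤ z.1)

theorem F_surj : ∀ u v w : Bool, ∃ z ∈ F, b z.1 z.2 = u ∧ b (z.1 + 1) z.2 = v ∧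
    b (z.1 + 1) (z.2 + 1) = w := by decide

theorem F_pos {z : ℕ × ℕ} (h : z ∈ F) : z ∈ Pos := by
  simp only [F, Finset.mem_filter] at h; exact h.2

/-- Apex and the two cells below. -/
def bits (z : ℕ × ℕ) : Bool × Bool × Bool :=
  (b z.1 z.2, b (z.1 + 1) z.2, b (z.1 + 1) (z.2 + 1))

theorem bits_image : bits '' Pos = Set.univ := by
  ext ⟨u, v, w⟩
  simp only [Set.mem_univ, iff_true]
  obtain ⟨z, hz, h1, h2, h3⟩ := F_surj u v w
  exact ⟨z, F_pos hz, by simp [bits, h1, h2, h3]⟩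

theorem ncard_bits {t l r n : ℕ} {α : Type} [Fintype α] [DecidableEq α]
    (f : Bool × Bool × Bool → α)
    (h : ∀ z w : ℕ × ℕ, pat t l r n z.1 z.2 = pat t l r n w.1 w.2 ↔ f (bits z) = f (bits w)) :
    (P t l r n).ncard = (Finset.univ.image f).card := by
  rw [P_image, ncard_image_congr Pos _ (f ∘ bits) (fun z _ w _ => h z w), Set.image_comp,
    bits_image, ← Set.ncard_coe_finset]
  congr 1
  simp

theorem base1 : (P 0 0 0 1).ncard = 2 := by
  rw [ncard_bits (fun z => z.1)]
  · decide
  · intro z w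
    rw [pat_eq_iff]
    constructor
    · intro h; exact h 0 0 (by decide)
    · intro h k i hs
      have : k = 0 ∧ i = 0 := by unfold sh at hs; omega
      obtain ⟨rfl, rfl⟩ := this
      exact h

theorem base2 {t l r : ℕ} (ht : t ≤ 1) (hl : l ≤ 1) (hr : r ≤ 1) :
    (P t l r 2).ncard = (Finset.univ.image (fun z : Bool × Bool × Bool =>
      (decide (t = 0) && z.1, decide (l = 0) && z.2.1, decide (r = 0) && z.2.2))).card := by
  apply ncard_bits
  intro z w
  rw [pat_eq_iff]
  simp only [bits, Prod.mk.injEq]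
  constructor
  · intro h
    refine ⟨?_, ?_, ?_⟩
    · by_cases h0 : t = 0
      · have := h 0 0 (by unfold sh; omega)
        simpa [h0] using this
      · simp [h0]
    · by_cases h0 : l = 0
      · have := h 1 0 (by unfold sh; omega)
        simpa [h0] using this
      · simp [h0]
    · by_cases h0 : r = 0
      · have := h 1 1 (by unfold sh; omega)
        simpa [h0] using this
      · simp [h0]
  · rintro ⟨h1, h2, h3⟩ k i hs
    have : (k = 0 ∧ i = 0 ∧ t = 0) ∨ (k = 1 ∧ i = 0 ∧ l = 0) ∨ (k = 1 ∧ i = 1 ∧ r = 0) := by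
      unfold sh at hs; omega
    rcases this with ⟨rfl, rfl, h0⟩ | ⟨rfl, rfl, h0⟩ | ⟨rfl, rfl, h0⟩
    · simpa [h0] using h1
    · simpa [h0] using h2
    · simpa [h0] using h3

theorem b_pascal (x y : ℕ) : b (x + 1) (y + 1) = xor (b x y) (b x (y + 1)) := by
  unfold b
  rw [Nat.choose_succ_succ, Nat.add_mod]
  rcases Nat.mod_two_eq_zero_or_one (x.choose y) with h | h <;>
  rcases Nat.mod_two_eq_zero_or_one (x.choose (y + 1)) with h' | h' <;>
  simp [h, h']

theorem base3 : (P 1 1 1 3).ncard = 4 := by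
  rw [ncard_bits (fun z => z.2)]
  · decide
  · intro z w
    rw [pat_eq_iff]
    simp only [bits, Prod.mk.injEq]
    constructor
    · intro h; exact ⟨h 1 0 (by decide), h 1 1 (by decide)⟩
    · rintro ⟨h1, h2⟩ k i hs
      have : (k = 1 ∧ i = 0) ∨ (k = 1 ∧ i = 1) ∨ (k = 2 ∧ i = 1) := by
        unfold sh at hs; omega
      rcases this with ⟨rfl, rfl⟩ | ⟨rfl, rfl⟩ | ⟨rfl, rfl⟩
      · exact h1
      · exact h2
      · rw [b_pascal (z.1 + 1) z.2, b_pascal (w.1 + 1) w.2, h1, h2]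

theorem count (n : ℕ) : ∀ t l r : ℕ, t ≤ 1 → l ≤ 1 → r ≤ 1 → 2 ≤ n → (n = 2 → t + l + r < 3) →
    ((P t l r n).ncard : ℤ) = 4 * (n : ℤ) ^ 2 - (6 + 4 * (t + l + r)) * n + 4 +
      3 * (t + l + r) + (t + l + r) ^ 2 := by
  induction n using Nat.strong_induction_on with
  | _ n ih =>
  intro t l r ht hl hr hn hn2
  by_cases h2 : n = 2
  · subst h2
    have := hn2 rfl
    rw [base2 ht hl hr]
    interval_cases t <;> interval_cases l <;> interval_cases r <;>
      first | omega | decide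
  by_cases h3 : n = 3 ∧ t + l + r = 3
  · obtain ⟨rfl, h3⟩ := h3
    obtain ⟨rfl, rfl, rfl⟩ : t = 1 ∧ l = 1 ∧ r = 1 := by omega
    rw [base3]; norm_num
  have ht' := total ht hl hr (show 3 ≤ n by omega)
  rcases Nat.even_or_odd' n with ⟨m, rfl | rfl⟩
  · rw [even00 ht hl hr (by omega) (by omega), even01 ht hl hr (by omega),
      even10 ht hl hr (by omega), even11 ht hl hr (by omega)] at ht'
    have q1 := ih m (by omega) 0 0 0 (by omega) (by omega) (by omega) (by omega) (by omega)
    have q2 := ih (m + 1) (by omega) 1 l r (by omega) (by omega) (by omega) (by omega) (by omega)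
    have q3 := ih (m + 1) (by omega) t l 1 (by omega) (by omega) (by omega) (by omega) (by omega)
    have q4 := ih (m + 1) (by omega) t 1 r (by omega) (by omega) (by omega) (by omega) (by omega)
    zify at ht'
    rw [q1, q2, q3, q4] at ht'
    rw [eq_sub_of_add_eq ht']
    clear ht' q1 q2 q3 q4
    interval_cases t <;> interval_cases l <;> interval_cases r <;> push_cast <;> ring
  · rw [odd00 ht hl hr (by omega), odd01 ht hl hr (by omega),
      odd10 ht hl hr (by omega), odd11 ht hl hr (by omega)] at ht'
    have q1 := ih (m + 1) (by omega) 0 l r (by omega) (by omega) (by omega) (by omega) (by omega)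
    have q2 : ((P 1 1 1 (m + 2)).ncard : ℤ) = 4 * (m : ℤ) ^ 2 - 2 * m + 2 := by
      by_cases hm : m = 1
      · subst hm; rw [base3]; norm_num
      · rw [ih (m + 2) (by omega) 1 1 1 (by omega) (by omega) (by omega) (by omega) (by omega)]
        push_cast; ring
    have q3 := ih (m + 1) (by omega) t 0 r (by omega) (by omega) (by omega) (by omega) (by omega)
    have q4 := ih (m + 1) (by omega) t l 0 (by omega) (by omega) (by omega) (by omega) (by omega)
    zify at ht'
    rw [q1, q2, q3, q4] at ht'
    rw [eq_sub_of_add_eq ht']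
    clear ht' q1 q2 q3 q4
    interval_cases t <;> interval_cases l <;> interval_cases r <;> push_cast <;> ring

theorem Pup_eq (n : ℕ) : Pup n = (fun z : ℕ × ℕ => upPattern n z.1 (2 * z.2)) '' Pos := by
  ext p; constructor
  · rintro ⟨r, c, h1, h2, rfl⟩
    refine ⟨(r, c / 2), ?_, ?_⟩
    · show c / 2 ≤ r
      omega
    · simp only
      rw [show 2 * (c / 2) = c by omega]
  · rintro ⟨⟨r, j⟩, h, rfl⟩
    have h : j ≤ r := h
    exact ⟨r, 2 * j, by omega, by omega, rfl⟩

theorem filled_even (x y : ℕ) : filled x (2 * y) = b x y := by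
  simp [filled, b]

theorem filled_odd (x y : ℕ) (h : y % 2 = 1) : filled x y = false := by
  simp [filled, h]

theorem up_eq_iff (n x y x' y' : ℕ) : upPattern n x (2 * y) = upPattern n x' (2 * y') ↔
    pat 0 0 0 n x y = pat 0 0 0 n x' y' := by
  rw [pat_eq_iff]
  constructor
  · intro h k i hs
    unfold sh at hs
    have := congrFun h (k, 2 * i)
    simp only [upPattern] at this
    rw [if_pos (by omega), if_pos (by omega), ← mul_add, ← mul_add, filled_even, filled_even] at this
    exact this
  · intro h
    funext ⟨k, m⟩
    simp only [upPattern]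
    split_ifs with hc
    · rcases Nat.even_or_odd' m with ⟨i, rfl | rfl⟩
      · rw [← mul_add, ← mul_add, filled_even, filled_even]
        exact h k i (by unfold sh; omega)
      · rw [filled_odd _ _ (by omega), filled_odd _ _ (by omega)]
    · rfl

theorem Pup_ncard (n : ℕ) : (Pup n).ncard = (P 0 0 0 n).ncard := by
  rw [Pup_eq, P_image]
  exact ncard_image_congr _ _ _ (fun z _ w _ => up_eq_iff n _ _ _ _)

theorem Pup_finite (n : ℕ) (hpos : 0 < (P 0 0 0 n).ncard) : (Pup n).Finite :=
  Set.finite_of_ncard_pos (by rw [Pup_ncard]; exact hpos)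

end SierpAux

theorem sierpinski_up_count (n : ℕ) (hn : 1 ≤ n) :
    (Pup n).Finite ∧ ((Pup n).ncard : ℤ) = 4 * (n : ℤ) ^ 2 - 6 * n + 4 := by
  have key : ((SierpAux.P 0 0 0 n).ncard : ℤ) = 4 * (n : ℤ) ^ 2 - 6 * n + 4 := by
    by_cases h1 : n = 1
    · subst h1; rw [SierpAux.base1]; norm_num
    · rw [SierpAux.count n 0 0 0 (by omega) (by omega) (by omega) (by omega) (by omega)]
      push_cast; ring
  refine ⟨SierpAux.Pup_finite n ?_, ?_⟩
  · have : (1 : ℤ) ≤ n := by exact_mod_cast hn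
    have h2 : (0 : ℤ) < ((SierpAux.P 0 0 0 n).ncard : ℤ) := by rw [key]; nlinarith
    exact_mod_cast h2
  · rw [SierpAux.Pup_ncard]; exact key
end

section
/- For every n ≥ 2, the number of distinct top-cut patterns of size n occurring in the Sierpiński triangle T equals 4n² − 10n + 8, i.e. B_n = 4n² − 10n + 8. -/
namespace Sier

/-- Filled upward units in the coordinates `(i, j)`, where row `= i + j`, index `= j`. -/
def b (i j : ℕ) : Bool := decide (Nat.choose (i + j) j % 2 = 1)

theorem lucas (n k : ℕ) :
    Nat.choose n k % 2 = (Nat.choose (n % 2) (k % 2) * Nat.choose (n / 2) (k / 2)) % 2 := by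
  have : Fact (Nat.Prime 2) := ⟨Nat.prime_two⟩
  exact Choose.choose_modEq_choose_mod_mul_choose_div_nat (n := n) (k := k) (p := 2)

theorem b_ee (i j : ℕ) : b (2 * i) (2 * j) = b i j := by
  unfold b
  rw [lucas]
  have h1 : (2 * i + 2 * j) % 2 = 0 := by omega
  have h2 : (2 * i + 2 * j) / 2 = i + j := by omega
  have h3 : (2 * j) % 2 = 0 := by omega
  have h4 : (2 * j) / 2 = j := by omega
  rw [h1, h2, h3, h4]; simp

theorem b_oe (i j : ℕ) : b (2 * i + 1) (2 * j) = b i j := by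
  unfold b
  rw [lucas]
  have h1 : (2 * i + 1 + 2 * j) % 2 = 1 := by omega
  have h2 : (2 * i + 1 + 2 * j) / 2 = i + j := by omega
  have h3 : (2 * j) % 2 = 0 := by omega
  have h4 : (2 * j) / 2 = j := by omega
  rw [h1, h2, h3, h4]; simp

theorem b_eo (i j : ℕ) : b (2 * i) (2 * j + 1) = b i j := by
  unfold b
  rw [lucas]
  have h1 : (2 * i + (2 * j + 1)) % 2 = 1 := by omega
  have h2 : (2 * i + (2 * j + 1)) / 2 = i + j := by omega
  have h3 : (2 * j + 1) % 2 = 1 := by omega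
  have h4 : (2 * j + 1) / 2 = j := by omega
  rw [h1, h2, h3, h4]; simp

theorem b_oo (i j : ℕ) : b (2 * i + 1) (2 * j + 1) = false := by
  unfold b
  rw [lucas]
  have h1 : (2 * i + 1 + (2 * j + 1)) % 2 = 0 := by omega
  have h3 : (2 * j + 1) % 2 = 1 := by omega
  rw [h1, h3]; simp

theorem b_symm (i j : ℕ) : b i j = b j i := by
  unfold b
  rw [← Nat.choose_symm_add, Nat.add_comm i j]

theorem b_zero (i : ℕ) : b i 0 = true := by simp [b]
theorem b_zero' (i : ℕ) : b 0 i = true := by simp [b]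

/-- Pascal's rule modulo 2. -/
theorem b_pascal (i j : ℕ) : b (i + 1) (j + 1) = xor (b i (j + 1)) (b (i + 1) j) := by
  unfold b
  have h1 : i + 1 + (j + 1) = (i + j + 1) + 1 := by ring
  have h2 : i + (j + 1) = i + j + 1 := by ring
  have h3 : i + 1 + j = i + j + 1 := by ring
  rw [h1, h2, h3, Nat.choose_succ_succ]
  rcases Nat.mod_two_eq_zero_or_one ((i+j+1).choose j) with h | h <;>
  rcases Nat.mod_two_eq_zero_or_one ((i+j+1).choose (j+1)) with h' | h' <;>
  simp [Nat.add_mod, h, h']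

theorem b_step (e d i j : ℕ) (he : e ≤ 1) (hd : d ≤ 1) :
    b (2 * i + e) (2 * j + d) = (b i j && b e d) := by
  have h1 : b 1 1 = false := b_oo 0 0
  interval_cases e <;> interval_cases d <;>
    simp [b_ee, b_oe, b_eo, b_oo, b_zero, b_zero', h1]

theorem b_half (i j : ℕ) : b i j = (b (i / 2) (j / 2) && b (i % 2) (j % 2)) := by
  have := b_step (i % 2) (j % 2) (i / 2) (j / 2) (by omega) (by omega)
  rwa [Nat.div_add_mod, Nat.div_add_mod] at this

theorem b_block (N : ℕ) : ∀ I J x y : ℕ, x < 2 ^ N → y < 2 ^ N →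
    b (2 ^ N * I + x) (2 ^ N * J + y) = (b I J && b x y) := by
  induction N with
  | zero =>
    intro I J x y hx hy
    have : x = 0 := by simpa using hx
    have : y = 0 := by simpa using hy
    subst_vars
    simp [b_zero]
  | succ N ih =>
    intro I J x y hx hy
    rw [pow_succ] at hx hy ⊢
    generalize hM : 2 ^ N = M at *
    have hI : M * 2 * I = 2 * (M * I) := by ring
    have hJ : M * 2 * J = 2 * (M * J) := by ring
    rw [b_half, b_half x y, hI, hJ]
    have e1 : (2 * (M * I) + x) / 2 = M * I + x / 2 := by omega
    have e2 : (2 * (M * J) + y) / 2 = M * J + y / 2 := by omega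
    have e3 : (2 * (M * I) + x) % 2 = x % 2 := by omega
    have e4 : (2 * (M * J) + y) % 2 = y % 2 := by omega
    rw [e1, e2, e3, e4, ih I J _ _ (by omega) (by omega), Bool.and_assoc]

theorem b_last (N : ℕ) : ∀ x y : ℕ, x + 1 = 2 ^ N → 1 ≤ y → y < 2 ^ N → b x y = false := by
  induction N with
  | zero => intro x y _ h1 h2; simp at h2; omega
  | succ N ih =>
    intro x y hx h1 hy
    rw [pow_succ] at hx hy
    by_cases h : y = 1
    · subst h
      rw [show x = 2 * (x / 2) + 1 by omega]
      exact b_oo _ 0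
    · rw [b_half, ih (x / 2) (y / 2) (by omega) (by omega) (by omega)]; rfl

/-- Membership of a cell in the triangle of size `n` with some corners cut. -/
def InS (n : ℕ) (τ l ρ : Bool) (x y : ℕ) : Prop :=
  x + y < n ∧ (τ = true → ¬ (x = 0 ∧ y = 0)) ∧ (l = true → ¬ (x + 1 = n ∧ y = 0)) ∧
    (ρ = true → ¬ (x = 0 ∧ y + 1 = n))

instance (n : ℕ) (τ l ρ : Bool) (x y : ℕ) : Decidable (InS n τ l ρ x y) := by
  unfold InS; infer_instance

/-- The pattern at position `u`. -/
def P (n : ℕ) (τ l ρ : Bool) (u : ℕ × ℕ) : ℕ × ℕ → Bool := fun q =>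
  decide (InS n τ l ρ q.1 q.2) && b (u.1 + q.1) (u.2 + q.2)

theorem P_eq_iff (n : ℕ) (τ l ρ : Bool) (u v : ℕ × ℕ) :
    P n τ l ρ u = P n τ l ρ v ↔
      ∀ x y, InS n τ l ρ x y → b (u.1 + x) (u.2 + y) = b (v.1 + x) (v.2 + y) := by
  constructor
  · intro h x y hxy
    have := congrFun h (x, y)
    simpa [P, hxy] using this
  · intro h
    funext ⟨x, y⟩
    by_cases hxy : InS n τ l ρ x y
    · simp [P, hxy, h x y hxy]
    · simp [P, hxy]

/-- The set of all patterns. -/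
def X (n : ℕ) (τ l ρ : Bool) : Set (ℕ × ℕ → Bool) := Set.range (P n τ l ρ)

theorem X_finite (n : ℕ) (τ l ρ : Bool) : (X n τ l ρ).Finite := by
  let F : (Fin n → Fin n → Bool) → (ℕ × ℕ → Bool) := fun g q =>
    if h : q.1 < n ∧ q.2 < n then g ⟨q.1, h.1⟩ ⟨q.2, h.2⟩ else false
  refine (Set.finite_range F).subset ?_
  rintro _ ⟨u, rfl⟩
  refine ⟨fun x y => P n τ l ρ u (x, y), ?_⟩
  funext ⟨x, y⟩
  by_cases h : x < n ∧ y < n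
  · simp [F, h]
  · have : ¬ InS n τ l ρ x y := by unfold InS; omega
    simp [F, h, P, this]

theorem ncard_range_congr {α β γ : Type*} (f : α → β) (g : α → γ)
    (h : ∀ x y, f x = f y ↔ g x = g y) : (Set.range f).ncard = (Set.range g).ncard := by
  refine Set.ncard_congr (fun y hy => g (Classical.choose hy)) ?_ ?_ ?_
  · intro y hy; exact ⟨_, rfl⟩
  · intro y z hy hz e
    have := (h _ _).2 e
    rwa [Classical.choose_spec hy, Classical.choose_spec hz] at this
  · rintro _ ⟨x, rfl⟩
    refine ⟨f x, ⟨x, rfl⟩, ?_⟩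
    rw [← h]
    exact Classical.choose_spec (⟨x, rfl⟩ : ∃ y, f y = f x)

/-- Patterns at positions of parity class `(α, β)`. -/
def A (n : ℕ) (τ l ρ : Bool) (α β : ℕ) : Set (ℕ × ℕ → Bool) :=
  Set.range (fun u : ℕ × ℕ => P n τ l ρ (2 * u.1 + α, 2 * u.2 + β))

theorem X_union (n : ℕ) (τ l ρ : Bool) :
    X n τ l ρ = (A n τ l ρ 0 0 ∪ A n τ l ρ 1 0) ∪ (A n τ l ρ 0 1 ∪ A n τ l ρ 1 1) := by
  ext p
  constructor
  · rintro ⟨⟨i, j⟩, rfl⟩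
    have key : ∀ α β, i % 2 = α → j % 2 = β → P n τ l ρ (i, j) ∈ A n τ l ρ α β := by
      intro α β hα hβ
      refine ⟨(i / 2, j / 2), ?_⟩
      have h1 : 2 * (i / 2) + α = i := by omega
      have h2 : 2 * (j / 2) + β = j := by omega
      simp only [h1, h2]
    rcases Nat.mod_two_eq_zero_or_one i with hi | hi <;>
    rcases Nat.mod_two_eq_zero_or_one j with hj | hj
    · exact Or.inl (Or.inl (key _ _ hi hj))
    · exact Or.inr (Or.inl (key _ _ hi hj))
    · exact Or.inl (Or.inr (key _ _ hi hj))
    · exact Or.inr (Or.inr (key _ _ hi hj))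
  · rintro ((⟨u, rfl⟩ | ⟨u, rfl⟩) | (⟨u, rfl⟩ | ⟨u, rfl⟩)) <;> exact ⟨_, rfl⟩

theorem A_card (n n' : ℕ) (τ l ρ τ' l' ρ' : Bool) (α β : ℕ)
    (h1 : ∀ p q, InS n' τ' l' ρ' p q →
      ∃ x y e d, InS n τ l ρ x y ∧ x + α = 2 * p + e ∧ y + β = 2 * q + d ∧ e + d ≤ 1)
    (h2 : ∀ x y, InS n τ l ρ x y → ((x + α) % 2 = 0 ∨ (y + β) % 2 = 0) →
      InS n' τ' l' ρ' ((x + α) / 2) ((y + β) / 2)) :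
    (A n τ l ρ α β).ncard = (X n' τ' l' ρ').ncard := by
  apply ncard_range_congr
  intro u v
  rw [P_eq_iff, P_eq_iff]
  constructor
  · intro h p q hpq
    obtain ⟨x, y, e, d, hS, hx, hy, hed⟩ := h1 p q hpq
    have := h x y hS
    simp only at this
    rw [show 2 * u.1 + α + x = 2 * (u.1 + p) + e by omega,
      show 2 * u.2 + β + y = 2 * (u.2 + q) + d by omega,
      show 2 * v.1 + α + x = 2 * (v.1 + p) + e by omega,
      show 2 * v.2 + β + y = 2 * (v.2 + q) + d by omega,
      b_step _ _ _ _ (by omega) (by omega), b_step _ _ _ _ (by omega) (by omega)] at this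
    have hb : b e d = true := by
      rcases Nat.eq_zero_or_pos e with h0 | h0
      · rw [h0, b_zero']
      · rw [show d = 0 by omega, b_zero]
    simpa [hb] using this
  · intro h x y hS
    simp only
    rw [show 2 * u.1 + α + x = 2 * (u.1 + (x + α) / 2) + (x + α) % 2 by omega,
      show 2 * u.2 + β + y = 2 * (u.2 + (y + β) / 2) + (y + β) % 2 by omega,
      show 2 * v.1 + α + x = 2 * (v.1 + (x + α) / 2) + (x + α) % 2 by omega,
      show 2 * v.2 + β + y = 2 * (v.2 + (y + β) / 2) + (y + β) % 2 by omega,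
      b_step _ _ _ _ (by omega) (by omega), b_step _ _ _ _ (by omega) (by omega)]
    by_cases hpar : (x + α) % 2 = 0 ∨ (y + β) % 2 = 0
    · rw [h _ _ (h2 x y hS hpar)]
    · rw [show (x + α) % 2 = 2 * 0 + 1 by omega, show (y + β) % 2 = 2 * 0 + 1 by omega, b_oo]
      simp

theorem A_card' (n n' : ℕ) (τ l ρ τ' l' ρ' : Bool) (α β : ℕ)
    (h1 : ∀ p q, InS n' τ' l' ρ' p q →
      (α ≤ 2 * p ∧ β ≤ 2 * q ∧ InS n τ l ρ (2 * p - α) (2 * q - β)) ∨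
      (β ≤ 2 * q ∧ InS n τ l ρ (2 * p + 1 - α) (2 * q - β)) ∨
      (α ≤ 2 * p ∧ InS n τ l ρ (2 * p - α) (2 * q + 1 - β))) (hα : α ≤ 1) (hβ : β ≤ 1)
    (h2 : ∀ x y, InS n τ l ρ x y → ((x + α) % 2 = 0 ∨ (y + β) % 2 = 0) →
      InS n' τ' l' ρ' ((x + α) / 2) ((y + β) / 2)) :
    (A n τ l ρ α β).ncard = (X n' τ' l' ρ').ncard := by
  refine A_card _ _ _ _ _ _ _ _ _ _ ?_ h2
  intro p q hpq
  rcases h1 p q hpq with ⟨ha, hb, h⟩ | ⟨hb, h⟩ | ⟨ha, h⟩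
  · exact ⟨_, _, 0, 0, h, by omega, by omega, by omega⟩
  · exact ⟨_, _, 1, 0, h, by omega, by omega, by omega⟩
  · exact ⟨_, _, 0, 1, h, by omega, by omega, by omega⟩

theorem even00 (t : ℕ) (ht : 2 ≤ t) (τ l ρ : Bool) :
    (A (2 * t) τ l ρ 0 0).ncard = (X t false false false).ncard := by
  refine A_card' _ _ _ _ _ _ _ _ _ _ ?_ (by omega) (by omega) ?_ <;> intro x y h <;>
    unfold InS at * <;> cases τ <;> cases l <;> cases ρ <;>
    simp only [Bool.false_eq_true, false_implies, true_implies, and_true] at h ⊢ <;> first | omega | (intro h'; omega) | grind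

theorem even10 (t : ℕ) (ht : 2 ≤ t) (τ l ρ : Bool) :
    (A (2 * t) τ l ρ 1 0).ncard = (X (t + 1) τ l true).ncard := by
  refine A_card' _ _ _ _ _ _ _ _ _ _ ?_ (by omega) (by omega) ?_ <;> intro x y h <;>
    unfold InS at * <;> cases τ <;> cases l <;> cases ρ <;>
    simp only [Bool.false_eq_true, false_implies, true_implies, and_true] at h ⊢ <;> first | omega | (intro h'; omega) | grind

theorem even01 (t : ℕ) (ht : 2 ≤ t) (τ l ρ : Bool) :
    (A (2 * t) τ l ρ 0 1).ncard = (X (t + 1) τ true ρ).ncard := by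
  refine A_card' _ _ _ _ _ _ _ _ _ _ ?_ (by omega) (by omega) ?_ <;> intro x y h <;>
    unfold InS at * <;> cases τ <;> cases l <;> cases ρ <;>
    simp only [Bool.false_eq_true, false_implies, true_implies, and_true] at h ⊢ <;> first | omega | (intro h'; omega) | grind

theorem even11 (t : ℕ) (ht : 2 ≤ t) (τ l ρ : Bool) :
    (A (2 * t) τ l ρ 1 1).ncard = (X (t + 1) true l ρ).ncard := by
  refine A_card' _ _ _ _ _ _ _ _ _ _ ?_ (by omega) (by omega) ?_ <;> intro x y h <;>
    unfold InS at * <;> cases τ <;> cases l <;> cases ρ <;>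
    simp only [Bool.false_eq_true, false_implies, true_implies, and_true] at h ⊢ <;> first | omega | (intro h'; omega) | grind

theorem odd00 (t : ℕ) (ht : 1 ≤ t) (τ l ρ : Bool) :
    (A (2 * t + 1) τ l ρ 0 0).ncard = (X (t + 1) false l ρ).ncard := by
  refine A_card' _ _ _ _ _ _ _ _ _ _ ?_ (by omega) (by omega) ?_ <;> intro x y h <;>
    unfold InS at * <;> cases τ <;> cases l <;> cases ρ <;>
    simp only [Bool.false_eq_true, false_implies, true_implies, and_true] at h ⊢ <;> first | omega | (intro h'; omega) | grind

theorem odd10 (t : ℕ) (ht : 1 ≤ t) (τ l ρ : Bool) :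
    (A (2 * t + 1) τ l ρ 1 0).ncard = (X (t + 1) τ false ρ).ncard := by
  refine A_card' _ _ _ _ _ _ _ _ _ _ ?_ (by omega) (by omega) ?_ <;> intro x y h <;>
    unfold InS at * <;> cases τ <;> cases l <;> cases ρ <;>
    simp only [Bool.false_eq_true, false_implies, true_implies, and_true] at h ⊢ <;> first | omega | (intro h'; omega) | grind

theorem odd01 (t : ℕ) (ht : 1 ≤ t) (τ l ρ : Bool) :
    (A (2 * t + 1) τ l ρ 0 1).ncard = (X (t + 1) τ l false).ncard := by
  refine A_card' _ _ _ _ _ _ _ _ _ _ ?_ (by omega) (by omega) ?_ <;> intro x y h <;>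
    unfold InS at * <;> cases τ <;> cases l <;> cases ρ <;>
    simp only [Bool.false_eq_true, false_implies, true_implies, and_true] at h ⊢ <;> first | omega | (intro h'; omega) | grind

theorem odd11 (t : ℕ) (ht : 1 ≤ t) (τ l ρ : Bool) :
    (A (2 * t + 1) τ l ρ 1 1).ncard = (X (t + 2) true true true).ncard := by
  refine A_card' _ _ _ _ _ _ _ _ _ _ ?_ (by omega) (by omega) ?_ <;> intro x y h <;>
    unfold InS at * <;> cases τ <;> cases l <;> cases ρ <;>
    simp only [Bool.false_eq_true, false_implies, true_implies, and_true] at h ⊢ <;> first | omega | (intro h'; omega) | grind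


theorem b_void (i j : ℕ) (hi : i % 2 = 1) (hj : j % 2 = 1) : b i j = false := by
  rw [show i = 2 * (i / 2) + 1 by omega, show j = 2 * (j / 2) + 1 by omega, b_oo]

theorem b_same (i j i' j' : ℕ) (hi : i / 2 = i' / 2) (hj : j / 2 = j' / 2)
    (h : i' % 2 = 0 ∨ j' % 2 = 0) (hb : b i j = true) : b i' j' = true := by
  rw [b_half] at hb ⊢
  simp only [Bool.and_eq_true] at hb ⊢
  rw [← hi, ← hj]
  refine ⟨hb.1, ?_⟩
  rcases h with h | h <;> rw [h]
  · exact b_zero' _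
  · exact b_zero _

/-- The everywhere unfilled pattern. -/
def blank : ℕ × ℕ → Bool := fun _ => false

/-- The ambiguous pattern at the right corner. -/
def CR (n : ℕ) (ρ : Bool) : ℕ × ℕ → Bool := fun q =>
  decide ((ρ = true ∧ q.1 ≤ 1 ∧ q.2 + 2 = n) ∨ (ρ = false ∧ q.1 = 0 ∧ q.2 + 1 = n))

/-- The ambiguous pattern at the left corner. -/
def CL (n : ℕ) (l : Bool) : ℕ × ℕ → Bool := fun q =>
  decide ((l = true ∧ q.2 ≤ 1 ∧ q.1 + 2 = n) ∨ (l = false ∧ q.2 = 0 ∧ q.1 + 1 = n))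

/-- The ambiguous pattern at the top corner. -/
def CT (τ : Bool) : ℕ × ℕ → Bool := fun q =>
  decide ((τ = true ∧ q.1 + q.2 = 1) ∨ (τ = false ∧ q.1 = 0 ∧ q.2 = 0))

theorem R_key (n : ℕ) (hn : 3 ≤ n) (τ l ρ : Bool) (u v : ℕ × ℕ)
    (h1 : u.1 % 2 ≠ v.1 % 2) (h2 : u.2 % 2 = v.2 % 2) (h : P n τ l ρ u = P n τ l ρ v) :
    P n τ l ρ u = blank ∨ P n τ l ρ u = CR n ρ := by
  rw [P_eq_iff] at h
  have claim : ∀ x y, InS n τ l ρ x y → b (u.1 + x) (u.2 + y) = true →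
      (u.2 + y) % 2 = 0 ∧ ¬ InS n τ l ρ x (y + 1) ∧ (1 ≤ x → ¬ InS n τ l ρ (x - 1) (y + 1)) := by
    intro x y hS hb
    have hb' := hb
    rw [h x y hS] at hb'
    have hJ : (u.2 + y) % 2 = 0 := by
      by_contra hJ
      rcases Nat.mod_two_eq_zero_or_one (u.1 + x) with hI | hI
      · rw [b_void _ _ (by omega) (by omega)] at hb'; simp at hb'
      · rw [b_void _ _ (by omega) (by omega)] at hb; simp at hb
    refine ⟨hJ, ?_, ?_⟩
    · intro hS'
      have e := h _ _ hS'
      rcases Nat.mod_two_eq_zero_or_one (u.1 + x) with hI | hI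
      · rw [b_same _ _ (u.1 + x) (u.2 + (y + 1)) rfl (by omega) (by omega) hb,
          b_void _ _ (by omega) (by omega)] at e
        simp at e
      · rw [b_same _ _ (v.1 + x) (v.2 + (y + 1)) rfl (by omega) (by omega) hb',
          b_void _ _ (by omega) (by omega)] at e
        simp at e
    · intro hx hS'
      have e := h _ _ hS'
      rcases Nat.mod_two_eq_zero_or_one (u.1 + x) with hI | hI
      · rw [b_same _ _ (v.1 + (x - 1)) (v.2 + (y + 1)) (by omega) (by omega) (by omega) hb',
          b_void _ _ (by omega) (by omega)] at e
        simp at e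
      · rw [b_same _ _ (u.1 + (x - 1)) (u.2 + (y + 1)) (by omega) (by omega) (by omega) hb,
          b_void _ _ (by omega) (by omega)] at e
        simp at e
  have region : ∀ x y, InS n τ l ρ x y → b (u.1 + x) (u.2 + y) = true → CR n ρ (x, y) = true := by
    intro x y hS hb
    obtain ⟨-, c1, c2⟩ := claim x y hS hb
    unfold InS at *
    simp only [CR, decide_eq_true_eq]
    cases ρ <;> cases l <;> cases τ <;>
      simp only [Bool.false_eq_true, false_implies, true_implies, and_true, true_and, false_and,
        or_false, false_or, Bool.true_eq_false] at * <;> grind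
  by_cases hbl : ∃ x y, InS n τ l ρ x y ∧ b (u.1 + x) (u.2 + y) = true
  · right
    obtain ⟨x, y, hS, hb⟩ := hbl
    have hreg := region x y hS hb
    have hJ := (claim x y hS hb).1
    funext ⟨p, q⟩
    by_cases hC : CR n ρ (p, q) = true
    · rw [hC]
      have hSp : InS n τ l ρ p q := by
        simp only [CR, decide_eq_true_eq] at hC hreg
        unfold InS at *
        grind
      suffices b (u.1 + p) (u.2 + q) = true by simp [P, hSp, this]
      simp only [CR, decide_eq_true_eq] at hC hreg
      have hqy : q = y := by
        rcases hC with ⟨a, _, _⟩ | ⟨a, _, _⟩ <;> rcases hreg with ⟨c, _, _⟩ | ⟨c, _, _⟩ <;>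
          first
          | omega
          | (rw [a] at c; simp at c)
      subst hqy
      by_cases hpx : p = x
      · rw [hpx]; exact hb
      · rcases Nat.mod_two_eq_zero_or_one (u.1 + min p x) with hI | hI
        · refine b_same (u.1 + x) (u.2 + q) _ _ ?_ rfl (by omega) hb
          omega
        · rw [h _ _ hSp]
          rw [h _ _ hS] at hb
          refine b_same (v.1 + x) (v.2 + q) _ _ ?_ rfl (by omega) hb
          omega
    · rw [Bool.not_eq_true] at hC
      rw [hC]
      by_contra hP
      rw [Bool.not_eq_false] at hP
      simp only [P, Bool.and_eq_true, decide_eq_true_eq] at hP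
      rw [region p q hP.1 hP.2] at hC
      simp at hC
  · left
    funext ⟨p, q⟩
    by_contra hP
    simp only [blank, Bool.not_eq_false, P, Bool.and_eq_true, decide_eq_true_eq] at hP
    exact hbl ⟨p, q, hP⟩

theorem T_key (n : ℕ) (hn : 3 ≤ n) (τ l ρ : Bool) (u v : ℕ × ℕ)
    (h1 : u.1 % 2 ≠ v.1 % 2) (h2 : u.2 % 2 ≠ v.2 % 2) (h : P n τ l ρ u = P n τ l ρ v) :
    P n τ l ρ u = blank ∨ P n τ l ρ u = CT τ := by
  rw [P_eq_iff] at h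
  have claim : ∀ x y, InS n τ l ρ x y → b (u.1 + x) (u.2 + y) = true →
      (u.1 + x + u.2 + y) % 2 = 1 ∧ (1 ≤ y → ¬ InS n τ l ρ x (y - 1)) ∧
        (1 ≤ x → ¬ InS n τ l ρ (x - 1) y) := by
    intro x y hS hb
    have hb' := hb
    rw [h x y hS] at hb'
    have hJ : (u.1 + x + u.2 + y) % 2 = 1 := by
      by_contra hJ
      rcases Nat.mod_two_eq_zero_or_one (u.1 + x) with hI | hI
      · rw [b_void _ _ (by omega) (by omega)] at hb'; simp at hb'
      · rw [b_void _ _ (by omega) (by omega)] at hb; simp at hb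
    refine ⟨hJ, ?_, ?_⟩
    · intro hy hS'
      have e := h _ _ hS'
      rcases Nat.mod_two_eq_zero_or_one (u.1 + x) with hI | hI
      · rw [b_same _ _ (u.1 + x) (u.2 + (y - 1)) rfl (by omega) (by omega) hb,
          b_void _ _ (by omega) (by omega)] at e
        simp at e
      · rw [b_same _ _ (v.1 + x) (v.2 + (y - 1)) rfl (by omega) (by omega) hb',
          b_void _ _ (by omega) (by omega)] at e
        simp at e
    · intro hx hS'
      have e := h _ _ hS'
      rcases Nat.mod_two_eq_zero_or_one (u.1 + x) with hI | hI
      · rw [b_same _ _ (v.1 + (x - 1)) (v.2 + y) (by omega) (by omega) (by omega) hb',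
          b_void _ _ (by omega) (by omega)] at e
        simp at e
      · rw [b_same _ _ (u.1 + (x - 1)) (u.2 + y) (by omega) (by omega) (by omega) hb,
          b_void _ _ (by omega) (by omega)] at e
        simp at e
  have region : ∀ x y, InS n τ l ρ x y → b (u.1 + x) (u.2 + y) = true → CT τ (x, y) = true := by
    intro x y hS hb
    obtain ⟨-, c1, c2⟩ := claim x y hS hb
    unfold InS at *
    simp only [CT, decide_eq_true_eq]
    cases ρ <;> cases l <;> cases τ <;>
      simp only [Bool.false_eq_true, false_implies, true_implies, and_true, true_and, false_and,
        or_false, false_or, Bool.true_eq_false] at * <;> grind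
  by_cases hbl : ∃ x y, InS n τ l ρ x y ∧ b (u.1 + x) (u.2 + y) = true
  · right
    obtain ⟨x, y, hS, hb⟩ := hbl
    have hreg := region x y hS hb
    have hJ := (claim x y hS hb).1
    funext ⟨p, q⟩
    by_cases hC : CT τ (p, q) = true
    · rw [hC]
      have hSp : InS n τ l ρ p q := by
        simp only [CT, decide_eq_true_eq] at hC hreg
        unfold InS at *
        grind
      suffices b (u.1 + p) (u.2 + q) = true by simp [P, hSp, this]
      simp only [CT, decide_eq_true_eq] at hC hreg
      have hqy : (p = x ∧ q = y) ∨ (p + q = 1 ∧ x + y = 1) := by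
        rcases hC with ⟨a, _⟩ | ⟨a, _, _⟩ <;> rcases hreg with ⟨c, _⟩ | ⟨c, _, _⟩ <;>
          first
          | omega
          | (rw [a] at c; simp at c)
      by_cases hpx : p = x
      · have hqy : q = y := by omega
        rw [hpx, hqy]; exact hb
      · rcases Nat.mod_two_eq_zero_or_one (u.1 + min p x) with hI | hI
        · refine b_same (u.1 + x) (u.2 + y) _ _ ?_ ?_ (by omega) hb <;> omega
        · rw [h _ _ hSp]
          rw [h _ _ hS] at hb
          refine b_same (v.1 + x) (v.2 + y) _ _ ?_ ?_ (by omega) hb <;> omega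
    · rw [Bool.not_eq_true] at hC
      rw [hC]
      by_contra hP
      rw [Bool.not_eq_false] at hP
      simp only [P, Bool.and_eq_true, decide_eq_true_eq] at hP
      rw [region p q hP.1 hP.2] at hC
      simp at hC
  · left
    funext ⟨p, q⟩
    by_contra hP
    simp only [blank, Bool.not_eq_false, P, Bool.and_eq_true, decide_eq_true_eq] at hP
    exact hbl ⟨p, q, hP⟩

/-- Reflection of patterns. -/
def sw (p : ℕ × ℕ → Bool) : ℕ × ℕ → Bool := fun q => p (q.2, q.1)

theorem sw_sw (p : ℕ × ℕ → Bool) : sw (sw p) = p := rfl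

theorem sw_P (n : ℕ) (τ l ρ : Bool) (i j : ℕ) :
    sw (P n τ l ρ (i, j)) = P n τ ρ l (j, i) := by
  funext ⟨x, y⟩
  have : InS n τ l ρ y x ↔ InS n τ ρ l x y := by unfold InS; grind
  simp only [sw, P, this]
  rw [b_symm]

theorem sw_CR (n : ℕ) (ρ : Bool) : sw (CR n ρ) = CL n ρ := rfl
theorem sw_blank : sw blank = blank := rfl

theorem mem_A (n : ℕ) (τ l ρ : Bool) (α β i j : ℕ) (hi : i % 2 = α) (hj : j % 2 = β) :
    P n τ l ρ (i, j) ∈ A n τ l ρ α β := by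
  refine ⟨(i / 2, j / 2), ?_⟩
  have h1 : 2 * (i / 2) + α = i := by omega
  have h2 : 2 * (j / 2) + β = j := by omega
  simp only [h1, h2]

theorem sw_A (n : ℕ) (τ l ρ : Bool) (α β : ℕ) (p : ℕ × ℕ → Bool) (h : p ∈ A n τ l ρ α β) :
    sw p ∈ A n τ ρ l β α := by
  obtain ⟨u, rfl⟩ := h
  refine ⟨(u.2, u.1), ?_⟩
  simp only [sw_P]

theorem inter_R (n : ℕ) (hn : 3 ≤ n) (τ l ρ : Bool) (β : ℕ) (p : ℕ × ℕ → Bool)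
    (h0 : p ∈ A n τ l ρ 0 β) (h1 : p ∈ A n τ l ρ 1 β) : p = blank ∨ p = CR n ρ := by
  obtain ⟨u, rfl⟩ := h0
  obtain ⟨v, hv⟩ := h1
  exact R_key n hn τ l ρ _ (2 * v.1 + 1, 2 * v.2 + β) (by simp only; omega) (by simp only; omega)
    hv.symm

theorem inter_L (n : ℕ) (hn : 3 ≤ n) (τ l ρ : Bool) (α : ℕ) (p : ℕ × ℕ → Bool)
    (h0 : p ∈ A n τ l ρ α 0) (h1 : p ∈ A n τ l ρ α 1) : p = blank ∨ p = CL n l := by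
  rcases inter_R n hn τ ρ l α (sw p) (sw_A _ _ _ _ _ _ _ h0) (sw_A _ _ _ _ _ _ _ h1) with h | h
  · left; rw [← sw_sw p, h]; rfl
  · right; rw [← sw_sw p, h]; rfl

theorem inter_T (n : ℕ) (hn : 3 ≤ n) (τ l ρ : Bool) (α β α' β' : ℕ) (hα : α % 2 ≠ α' % 2)
    (hβ : β % 2 ≠ β' % 2) (p : ℕ × ℕ → Bool)
    (h0 : p ∈ A n τ l ρ α β) (h1 : p ∈ A n τ l ρ α' β') : p = blank ∨ p = CT τ := by
  obtain ⟨u, rfl⟩ := h0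
  obtain ⟨v, hv⟩ := h1
  exact T_key n hn τ l ρ _ (2 * v.1 + α', 2 * v.2 + β') (by simp only; omega)
    (by simp only; omega) hv.symm

theorem zsq (N i j : ℕ) (hi : 2 ^ N ≤ i) (hi' : i < 2 * 2 ^ N) (hj : 2 ^ N ≤ j)
    (hj' : j < 2 * 2 ^ N) : b i j = false := by
  have := b_block N 1 1 (i - 2 ^ N) (j - 2 ^ N) (by omega) (by omega)
  rw [show 2 ^ N * 1 + (i - 2 ^ N) = i by omega, show 2 ^ N * 1 + (j - 2 ^ N) = j by omega,
    b_void 1 1 rfl rfl] at this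
  simpa using this

theorem exists_pow (n : ℕ) : ∃ N, n + 5 < 2 ^ N ∧ 2 ^ N % 2 = 0 := by
  refine ⟨n + 5, Nat.lt_two_pow_self, ?_⟩
  rw [pow_succ]; omega

theorem blank_mem (n : ℕ) (τ l ρ : Bool) (α β : ℕ) (hα : α ≤ 1) (hβ : β ≤ 1) :
    blank ∈ A n τ l ρ α β := by
  obtain ⟨N, hN, hN'⟩ := exists_pow n
  convert mem_A n τ l ρ α β (2 ^ N + α) (2 ^ N + β) (by omega) (by omega) using 1
  funext ⟨x, y⟩
  symm
  by_contra hP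
  simp only [blank, Bool.not_eq_false, P, Bool.and_eq_true, decide_eq_true_eq] at hP
  obtain ⟨h1, h2⟩ := hP
  rw [zsq N _ _ (by omega) (by have := h1.1; omega) (by omega) (by have := h1.1; omega)] at h2
  simp at h2

theorem P_eq_of (n : ℕ) (τ l ρ : Bool) (u : ℕ × ℕ) (C : ℕ × ℕ → Bool)
    (h1 : ∀ x y, C (x, y) = true → InS n τ l ρ x y ∧ b (u.1 + x) (u.2 + y) = true)
    (h2 : ∀ x y, C (x, y) = false → InS n τ l ρ x y → b (u.1 + x) (u.2 + y) = false) :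
    P n τ l ρ u = C := by
  funext ⟨x, y⟩
  cases hC : C (x, y)
  · by_cases hS : InS n τ l ρ x y
    · simp [P, h2 x y hC hS]
    · simp [P, hS]
  · obtain ⟨hS, hb⟩ := h1 x y hC
    simp [P, hS, hb]

theorem CR_mem (n : ℕ) (hn : 3 ≤ n) (τ l ρ : Bool) (α β : ℕ) (hα : α ≤ 1) (hβ : β ≤ 1)
    (hpar : (n + β + ρ.toNat) % 2 = 1) : CR n ρ ∈ A n τ l ρ α β := by
  obtain ⟨N, hN, hN'⟩ := exists_pow n
  have hb2 : b 1 2 = true := by rw [show b 1 2 = b (2 * 0 + 1) (2 * 1) from rfl, b_oe, b_zero']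
  have hfill : ∀ x, x < 2 ^ N → b (2 ^ N + x) (2 * 2 ^ N) = true := by
    intro x hx
    have := b_block N 1 2 x 0 hx (by omega)
    rw [hb2, b_zero, Bool.and_self, show 2 ^ N * 1 + x = 2 ^ N + x by ring,
      show 2 ^ N * 2 + 0 = 2 * 2 ^ N by ring] at this
    exact this
  have hρ : ρ.toNat ≤ 1 := by cases ρ <;> simp
  convert mem_A n τ l ρ α β (2 ^ N + α) (2 * 2 ^ N + ρ.toNat - (n - 1)) (by omega) (by omega)
    using 1
  symm
  apply P_eq_of
  · intro x y hC
    simp only [CR, decide_eq_true_eq] at hC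
    refine ⟨by unfold InS; grind, ?_⟩
    have hx : x ≤ 1 := by omega
    have hy : 2 * 2 ^ N + ρ.toNat - (n - 1) + y = 2 * 2 ^ N := by
      rcases hC with ⟨h, _, _⟩ | ⟨h, _, _⟩ <;> rw [h] <;> simp only [Bool.toNat_true,
        Bool.toNat_false] <;> omega
    simp only [hy, Nat.add_assoc]
    exact hfill _ (by omega)
  · intro x y hC hS
    simp only [CR, decide_eq_false_iff_not] at hC
    have hS1 := hS.1
    have hy : y + ρ.toNat + 1 < n := by
      unfold InS at hS
      cases ρ <;> simp at hC hS ⊢ <;> grind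
    simp only
    exact zsq N _ _ (by omega) (by omega) (by omega) (by omega)

theorem CL_mem (n : ℕ) (hn : 3 ≤ n) (τ l ρ : Bool) (α β : ℕ) (hα : α ≤ 1) (hβ : β ≤ 1)
    (hpar : (n + α + l.toNat) % 2 = 1) : CL n l ∈ A n τ l ρ α β :=
  sw_A _ _ _ _ _ _ _ (CR_mem n hn τ ρ l β α hβ hα hpar)

theorem CR_not_mem (n : ℕ) (hn : 3 ≤ n) (τ l ρ : Bool) (β : ℕ)
    (hpar : (n + β + ρ.toNat) % 2 = 0) : CR n ρ ∉ A n τ l ρ 1 β := by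
  rintro ⟨u, hu⟩
  have hρ : ρ.toNat ≤ 1 := by cases ρ <;> simp
  have h := congrFun hu (0, n - 1 - ρ.toNat)
  have : CR n ρ (0, n - 1 - ρ.toNat) = true := by
    cases ρ <;> simp [CR] <;> omega
  rw [this] at h
  simp only [P, Bool.and_eq_true] at h
  rw [b_void _ _ (by omega) (by omega)] at h
  simp at h

theorem CT_not_mem (n : ℕ) (τ l ρ : Bool) :
    CT τ ∉ A n τ l ρ (1 - τ.toNat) 1 := by
  rintro ⟨u, hu⟩
  have h := congrFun hu (τ.toNat, 0)
  have : CT τ (τ.toNat, 0) = true := by cases τ <;> simp [CT]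
  rw [this] at h
  simp only [P, Bool.and_eq_true] at h
  rw [b_void _ _ (by cases τ <;> simp) (by omega)] at h
  simp at h

theorem b_last2 (N x y : ℕ) (hx : x + 2 = 2 ^ N) (h1 : 2 ≤ y) (h2 : y < 2 ^ N) :
    b x y = false := by
  cases N with
  | zero => simp at h2; omega
  | succ N =>
    rw [pow_succ] at hx h2
    rw [b_half, b_last N (x / 2) (y / 2) (by omega) (by omega) (by omega)]; rfl

theorem b_shift (N x y : ℕ) (hx : x < 2 ^ N) (hy : y < 2 ^ N) : b x (2 ^ N + y) = b x y := by
  have := b_block N 0 1 x y hx hy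
  rw [b_zero'] at this
  simpa using this

/-- The apex pattern with uncut top. -/
theorem CT_mem_uncut (n : ℕ) (hn : 3 ≤ n) (l ρ : Bool) : CT false ∈ A n false l ρ 1 0 := by
  obtain ⟨N, hN, hN'⟩ := exists_pow n
  convert mem_A n false l ρ 1 0 (2 ^ N - 1) (2 ^ N) (by omega) (by omega) using 1
  symm
  apply P_eq_of
  · intro x y hC
    simp [CT] at hC
    obtain ⟨rfl, rfl⟩ := hC
    refine ⟨by unfold InS; grind, ?_⟩
    simp only [Nat.add_zero]
    have := b_shift N (2 ^ N - 1) 0 (by omega) (by omega)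
    rw [Nat.add_zero, b_zero] at this
    exact this
  · intro x y hC hS
    simp [CT] at hC
    have := hS.1
    rcases Nat.eq_zero_or_pos x with h | h
    · subst h
      simp only [Nat.add_zero]
      rw [b_shift _ _ _ (by omega) (by omega), b_last N _ _ (by omega) (by omega) (by omega)]
    · exact zsq N _ _ (by simp only; omega) (by simp only; omega) (by simp only; omega)
        (by simp only; omega)

theorem CT_mem_uncut' (n : ℕ) (hn : 3 ≤ n) (l ρ : Bool) : CT false ∈ A n false l ρ 0 1 := by
  have h := sw_A _ _ _ _ _ _ _ (CT_mem_uncut n hn ρ l)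
  have e : sw (CT false) = CT false := by
    funext ⟨x, y⟩; simp [sw, CT, and_comm]
  rwa [e] at h

theorem CT_mem_cut (n : ℕ) (hn : 3 ≤ n) (l ρ : Bool) : CT true ∈ A n true l ρ 0 0 := by
  obtain ⟨N, hN, hN'⟩ := exists_pow n
  convert mem_A n true l ρ 0 0 (2 ^ N - 2) (2 ^ N) (by omega) (by omega) using 1
  symm
  apply P_eq_of
  · intro x y hC
    simp [CT] at hC
    refine ⟨by unfold InS; grind, ?_⟩
    simp only
    rw [b_shift _ _ _ (by omega) (by omega)]
    rcases Nat.eq_zero_or_pos x with h | h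
    · rw [show y = 2 * 0 + 1 by omega, show 2 ^ N - 2 + x = 2 * ((2 ^ N - 2) / 2) by omega, b_eo,
        b_zero]
    · rw [show y = 0 by omega, b_zero]
  · intro x y hC hS
    simp [CT] at hC
    have := hS.1
    have h0 := hS.2.1 rfl
    simp only
    by_cases hx : 2 ≤ x
    · exact zsq N _ _ (by omega) (by omega) (by omega) (by omega)
    · rw [b_shift _ _ _ (by omega) (by omega)]
      rcases Nat.eq_zero_or_pos x with h | h
      · exact b_last2 N _ _ (by omega) (by omega) (by omega)
      · exact b_last N _ _ (by omega) (by omega) (by omega)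

theorem CT_mem_cut' (n : ℕ) (hn : 3 ≤ n) (l ρ : Bool) : CT true ∈ A n true l ρ 1 1 := by
  obtain ⟨N, hN, hN'⟩ := exists_pow n
  convert mem_A n true l ρ 1 1 (2 ^ N - 1) (2 ^ N - 1) (by omega) (by omega) using 1
  symm
  have key : ∀ y, 1 ≤ y → y ≤ n → b (2 ^ N - 1) (2 ^ N - 1 + y) = decide (y = 1) := by
    intro y h1 h2
    rw [show 2 ^ N - 1 + y = 2 ^ N + (y - 1) by omega, b_shift _ _ _ (by omega) (by omega)]
    by_cases h : y = 1
    · simp [h, b_zero]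
    · rw [b_last N _ _ (by omega) (by omega) (by omega)]; simp [h]
  apply P_eq_of
  · intro x y hC
    simp [CT] at hC
    refine ⟨by unfold InS; grind, ?_⟩
    simp only
    rcases Nat.eq_zero_or_pos x with h | h
    · rw [h, Nat.add_zero, key y (by omega) (by omega)]; simp; omega
    · rw [show y = 0 by omega, Nat.add_zero, b_symm, key x (by omega) (by omega)]; simp; omega
  · intro x y hC hS
    simp [CT] at hC
    have := hS.1
    have h0 := hS.2.1 rfl
    simp only
    rcases Nat.eq_zero_or_pos x with h | h
    · rw [h, Nat.add_zero, key y (by omega) (by omega)]; simp; omega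
    · rcases Nat.eq_zero_or_pos y with h' | h'
      · rw [h', Nat.add_zero, b_symm, key x (by omega) (by omega)]; simp; omega
      · exact zsq N _ _ (by omega) (by omega) (by omega) (by omega)

theorem A_finite (n : ℕ) (τ l ρ : Bool) (α β : ℕ) : (A n τ l ρ α β).Finite := by
  refine (X_finite n τ l ρ).subset ?_
  rintro _ ⟨u, rfl⟩
  exact ⟨_, rfl⟩

theorem CR_ne (n : ℕ) (hn : 3 ≤ n) (ρ : Bool) : blank ≠ CR n ρ := by
  intro h
  have := congrFun h (0, n - 1 - ρ.toNat)
  cases ρ <;> simp [blank, CR] at this <;> omega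

theorem CL_ne (n : ℕ) (hn : 3 ≤ n) (ρ : Bool) : blank ≠ CL n ρ := by
  intro h
  have := congrFun h (n - 1 - ρ.toNat, 0)
  cases ρ <;> simp [blank, CL] at this <;> omega

theorem CT_ne (τ : Bool) : blank ≠ CT τ := by
  intro h
  have := congrFun h (0, τ.toNat)
  cases τ <;> simp [blank, CT] at this

theorem CL_ne_CT (n : ℕ) (hn : 3 ≤ n) (τ l : Bool) : CL n l ≠ CT τ := by
  intro h
  have := congrFun h (0, τ.toNat)
  cases τ <;> cases l <;> simp [CL, CT] at this <;> omega

theorem inter_R_card (n : ℕ) (hn : 3 ≤ n) (τ l ρ : Bool) :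
    (A n τ l ρ 0 0 ∩ A n τ l ρ 1 0).ncard + (A n τ l ρ 0 1 ∩ A n τ l ρ 1 1).ncard = 3 := by
  have good : ∀ β ≤ 1, (n + β + ρ.toNat) % 2 = 1 →
      (A n τ l ρ 0 β ∩ A n τ l ρ 1 β).ncard = 2 := by
    intro β hβ hp
    rw [show A n τ l ρ 0 β ∩ A n τ l ρ 1 β = {blank, CR n ρ} from ?_]
    · exact Set.ncard_pair (CR_ne n hn ρ)
    · ext p
      constructor
      · rintro ⟨h0, h1⟩
        exact inter_R n hn τ l ρ β p h0 h1
      · rintro (rfl | rfl)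
        · exact ⟨blank_mem _ _ _ _ _ _ (by omega) hβ, blank_mem _ _ _ _ _ _ (by omega) hβ⟩
        · exact ⟨CR_mem n hn _ _ _ _ _ (by omega) hβ hp, CR_mem n hn _ _ _ _ _ (by omega) hβ hp⟩
  have bad : ∀ β ≤ 1, (n + β + ρ.toNat) % 2 = 0 →
      (A n τ l ρ 0 β ∩ A n τ l ρ 1 β).ncard = 1 := by
    intro β hβ hp
    rw [show A n τ l ρ 0 β ∩ A n τ l ρ 1 β = {blank} from ?_]
    · exact Set.ncard_singleton _
    · ext p
      constructor
      · rintro ⟨h0, h1⟩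
        rcases inter_R n hn τ l ρ β p h0 h1 with h | h
        · exact h
        · rw [h] at h1
          exact absurd h1 (CR_not_mem n hn τ l ρ β hp)
      · rintro rfl
        exact ⟨blank_mem _ _ _ _ _ _ (by omega) hβ, blank_mem _ _ _ _ _ _ (by omega) hβ⟩
  rcases Nat.mod_two_eq_zero_or_one (n + ρ.toNat) with h | h
  · rw [bad 0 (by omega) (by omega), good 1 (by omega) (by omega)]
  · rw [good 0 (by omega) (by omega), bad 1 (by omega) (by omega)]

theorem inter_LT_card (n : ℕ) (hn : 3 ≤ n) (τ l ρ : Bool) :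
    ((A n τ l ρ 0 0 ∪ A n τ l ρ 1 0) ∩ (A n τ l ρ 0 1 ∪ A n τ l ρ 1 1)).ncard = 3 := by
  rw [show (A n τ l ρ 0 0 ∪ A n τ l ρ 1 0) ∩ (A n τ l ρ 0 1 ∪ A n τ l ρ 1 1) =
    {blank, CL n l, CT τ} from ?_]
  · rw [Set.ncard_eq_three]
    exact ⟨_, _, _, CL_ne n hn l, CT_ne τ, CL_ne_CT n hn τ l, rfl⟩
  · ext p
    simp only [Set.mem_insert_iff, Set.mem_singleton_iff]
    constructor
    · rintro ⟨h0 | h0, h1 | h1⟩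
      · have := inter_L n hn τ l ρ 0 p h0 h1; tauto
      · have := inter_T n hn τ l ρ 0 0 1 1 (by omega) (by omega) p h0 h1; tauto
      · have := inter_T n hn τ l ρ 1 0 0 1 (by omega) (by omega) p h0 h1; tauto
      · have := inter_L n hn τ l ρ 1 p h0 h1; tauto
    · rintro (rfl | rfl | rfl)
      · exact ⟨Or.inl (blank_mem _ _ _ _ _ _ (by omega) (by omega)),
          Or.inl (blank_mem _ _ _ _ _ _ (by omega) (by omega))⟩
      · rcases Nat.mod_two_eq_zero_or_one (n + l.toNat) with h | h
        · exact ⟨Or.inr (CL_mem n hn _ _ _ _ _ (by omega) (by omega) (by omega)),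
            Or.inr (CL_mem n hn _ _ _ _ _ (by omega) (by omega) (by omega))⟩
        · exact ⟨Or.inl (CL_mem n hn _ _ _ _ _ (by omega) (by omega) (by omega)),
            Or.inl (CL_mem n hn _ _ _ _ _ (by omega) (by omega) (by omega))⟩
      · cases τ
        · exact ⟨Or.inr (CT_mem_uncut n hn l ρ), Or.inl (CT_mem_uncut' n hn l ρ)⟩
        · exact ⟨Or.inl (CT_mem_cut n hn l ρ), Or.inr (CT_mem_cut' n hn l ρ)⟩

theorem X_card (n : ℕ) (hn : 3 ≤ n) (τ l ρ : Bool) :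
    (X n τ l ρ).ncard + 6 = (A n τ l ρ 0 0).ncard + (A n τ l ρ 1 0).ncard +
      (A n τ l ρ 0 1).ncard + (A n τ l ρ 1 1).ncard := by
  have f := A_finite n τ l ρ
  have h1 := Set.ncard_union_add_ncard_inter _ _ (f 0 0) (f 1 0)
  have h2 := Set.ncard_union_add_ncard_inter _ _ (f 0 1) (f 1 1)
  have h3 := Set.ncard_union_add_ncard_inter _ _ ((f 0 0).union (f 1 0)) ((f 0 1).union (f 1 1))
  rw [← X_union, inter_LT_card n hn] at h3
  have h4 := inter_R_card n hn τ l ρ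
  omega

/-- Masked triples of bits. -/
def mask (τ l ρ : Bool) (s : Bool × Bool × Bool) : Bool × Bool × Bool :=
  (!τ && s.1, !l && s.2.1, !ρ && s.2.2)

theorem triples (s : Bool × Bool × Bool) :
    ∃ u : ℕ × ℕ, (b u.1 u.2, b (u.1 + 1) u.2, b u.1 (u.2 + 1)) = s := by
  obtain ⟨x, y, z⟩ := s
  cases x <;> cases y <;> cases z
  · exact ⟨(2, 2), by decide⟩
  · exact ⟨(1, 3), by decide⟩
  · exact ⟨(3, 1), by decide⟩
  · exact ⟨(1, 1), by decide⟩
  · exact ⟨(1, 2), by decide⟩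
  · exact ⟨(0, 1), by decide⟩
  · exact ⟨(1, 0), by decide⟩
  · exact ⟨(0, 0), by decide⟩

theorem mask_card (τ l ρ : Bool) :
    (Set.range (fun u : ℕ × ℕ => mask τ l ρ (b u.1 u.2, b (u.1 + 1) u.2, b u.1 (u.2 + 1)))).ncard
      = (Finset.univ.image (mask τ l ρ)).card := by
  rw [← Set.ncard_coe_finset]
  congr 1
  ext s
  simp only [Set.mem_range, Finset.coe_image, Finset.coe_univ, Set.image_univ]
  constructor
  · rintro ⟨u, rfl⟩; exact ⟨_, rfl⟩
  · rintro ⟨s, rfl⟩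
    obtain ⟨u, hu⟩ := triples s
    exact ⟨u, by rw [hu]⟩

theorem base2 (τ l ρ : Bool) :
    (X 2 τ l ρ).ncard = (Finset.univ.image (mask τ l ρ)).card := by
  rw [← mask_card, X]
  apply ncard_range_congr
  intro u v
  rw [P_eq_iff]
  simp only [mask, Prod.mk.injEq]
  constructor
  · intro h
    have h1 := h 0 0
    have h2 := h 1 0
    have h3 := h 0 1
    unfold InS at h1 h2 h3
    cases τ <;> cases l <;> cases ρ <;> simp at h1 h2 h3 ⊢ <;> simp [*]
  · rintro ⟨h1, h2, h3⟩ x y hS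
    unfold InS at hS
    have : (x = 0 ∧ y = 0) ∨ (x = 1 ∧ y = 0) ∨ (x = 0 ∧ y = 1) := by omega
    rcases this with ⟨rfl, rfl⟩ | ⟨rfl, rfl⟩ | ⟨rfl, rfl⟩
    · cases τ <;> simp_all
    · cases l <;> simp_all
    · cases ρ <;> simp_all

theorem base3 : (X 3 true true true).ncard = 4 := by
  have h4 : (Finset.univ.image (mask true false false)).card = 4 := by decide
  rw [← h4, ← mask_card, X]
  apply ncard_range_congr
  intro u v
  rw [P_eq_iff]
  simp only [mask, Prod.mk.injEq]
  constructor
  · intro h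
    have h2 := h 1 0 (by unfold InS; simp)
    have h3 := h 0 1 (by unfold InS; simp)
    simpa using ⟨h2, h3⟩
  · rintro ⟨-, h2, h3⟩ x y hS
    simp only [Bool.not_false, Bool.true_and] at h2 h3
    unfold InS at hS
    have : (x = 1 ∧ y = 1) ∨ (x = 1 ∧ y = 0) ∨ (x = 0 ∧ y = 1) := by simp at hS; omega
    rcases this with ⟨rfl, rfl⟩ | ⟨rfl, rfl⟩ | ⟨rfl, rfl⟩
    · rw [b_pascal, b_pascal, h2, h3]
    · exact h2
    · exact h3

theorem main_count (n : ℕ) : ∀ τ l ρ : Bool, 2 ≤ n →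
    ¬ (n = 2 ∧ τ = true ∧ l = true ∧ ρ = true) →
    ((X n τ l ρ).ncard : ℤ) = (2 * n - ((τ.toNat + l.toNat + ρ.toNat : ℕ) : ℤ)) ^ 2
      - 3 * (2 * n - ((τ.toNat + l.toNat + ρ.toNat : ℕ) : ℤ)) + 4 := by
  induction n using Nat.strong_induction_on with
  | _ n ih =>
  intro τ l ρ hn hf
  rcases Nat.lt_or_ge n 3 with h3 | h3
  · obtain rfl : n = 2 := by omega
    rw [base2]
    revert hf
    cases τ <;> cases l <;> cases ρ <;> decide
  by_cases h33 : n = 3 ∧ τ = true ∧ l = true ∧ ρ = true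
  · obtain ⟨rfl, rfl, rfl, rfl⟩ := h33
    rw [base3]
    decide
  have hX := X_card n h3 τ l ρ
  rcases Nat.even_or_odd' n with ⟨t, rfl | rfl⟩
  · have ht : 2 ≤ t := by omega
    rw [even00 t ht, even10 t ht, even01 t ht, even11 t ht] at hX
    have e1 := ih t (by omega) false false false ht (by simp)
    have e2 := ih (t + 1) (by omega) τ l true (by omega) (by omega)
    have e3 := ih (t + 1) (by omega) τ true ρ (by omega) (by omega)
    have e4 := ih (t + 1) (by omega) true l ρ (by omega) (by omega)
    zify at hX
    rw [e1, e2, e3, e4] at hX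
    rw [eq_sub_of_add_eq hX]
    cases τ <;> cases l <;> cases ρ <;> simp <;> ring
  · have ht : 1 ≤ t := by omega
    rw [odd00 t ht, odd10 t ht, odd01 t ht, odd11 t ht] at hX
    have e1 := ih (t + 1) (by omega) false l ρ (by omega) (by simp)
    have e2 := ih (t + 1) (by omega) τ false ρ (by omega) (by simp)
    have e3 := ih (t + 1) (by omega) τ l false (by omega) (by simp)
    have e4 : ((X (t + 2) true true true).ncard : ℤ) = (2 * (t + 2 : ℕ) - 3) ^ 2
        - 3 * (2 * (t + 2 : ℕ) - 3) + 4 := by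
      rcases Nat.lt_or_ge t 2 with h | h
      · obtain rfl : t = 1 := by omega
        rw [base3]; norm_num
      · have := ih (t + 2) (by omega) true true true (by omega) (by omega)
        simpa using this
    zify at hX
    rw [e1, e2, e3, e4] at hX
    rw [eq_sub_of_add_eq hX]
    cases τ <;> cases l <;> cases ρ <;> simp <;> ring

theorem filled_even (i j : ℕ) : filled (i + j) (2 * j) = b i j := by
  simp [filled, b]

theorem filled_odd (r j : ℕ) : filled r (2 * j + 1) = false := by
  simp only [filled, decide_eq_false_iff_not]; omega

theorem PtopCut_eq (n : ℕ) :
    PtopCut n = Set.range (fun u : ℕ × ℕ => topCutPattern n (u.1 + u.2) (2 * u.2)) := by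
  ext p
  constructor
  · rintro ⟨r, c, h1, h2, rfl⟩
    refine ⟨(r - c / 2, c / 2), ?_⟩
    simp only
    rw [show r - c / 2 + c / 2 = r by omega, show 2 * (c / 2) = c by omega]
  · rintro ⟨u, rfl⟩
    exact ⟨_, _, by omega, by omega, rfl⟩

/-- The top-cut pattern as a function of the sheared pattern. -/
theorem topCut_link (n : ℕ) (u v : ℕ × ℕ) :
    topCutPattern n (u.1 + u.2) (2 * u.2) = topCutPattern n (v.1 + v.2) (2 * v.2) ↔
      P n true false false u = P n true false false v := by
  rw [P_eq_iff]
  constructor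
  · intro h x y hS
    have := congrFun h (x + y, 2 * y)
    unfold InS at hS
    have hc : 1 ≤ x + y ∧ x + y < n ∧ 2 * y ≤ 2 * (x + y) := by
      simp at hS; omega
    simp only [topCutPattern, if_pos hc] at this
    rw [show u.1 + u.2 + (x + y) = (u.1 + x) + (u.2 + y) by ring,
      show v.1 + v.2 + (x + y) = (v.1 + x) + (v.2 + y) by ring,
      ← Nat.mul_add, ← Nat.mul_add, filled_even, filled_even] at this
    exact this
  · intro h
    funext ⟨k, m⟩
    simp only [topCutPattern]
    by_cases hc : 1 ≤ k ∧ k < n ∧ m ≤ 2 * k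
    · rw [if_pos hc, if_pos hc]
      rcases Nat.even_or_odd' m with ⟨y, rfl | rfl⟩
      · obtain ⟨x, rfl⟩ : ∃ x, k = x + y := ⟨k - y, by omega⟩
        rw [show u.1 + u.2 + (x + y) = (u.1 + x) + (u.2 + y) by ring,
          show v.1 + v.2 + (x + y) = (v.1 + x) + (v.2 + y) by ring,
          ← Nat.mul_add, ← Nat.mul_add, filled_even, filled_even]
        exact h x y (by unfold InS; simp; omega)
      · rw [← Nat.add_assoc, ← Nat.add_assoc, ← Nat.mul_add, ← Nat.mul_add,
          filled_odd, filled_odd]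
    · rw [if_neg hc, if_neg hc]

theorem PtopCut_finite (n : ℕ) : (PtopCut n).Finite := by
  let F : (Fin n → Fin (2 * n) → Bool) → (ℕ × ℕ → Bool) := fun g q =>
    if h : q.1 < n ∧ q.2 < 2 * n then g ⟨q.1, h.1⟩ ⟨q.2, h.2⟩ else false
  refine (Set.finite_range F).subset ?_
  rintro _ ⟨r, c, -, -, rfl⟩
  refine ⟨fun x y => topCutPattern n r c (x, y), ?_⟩
  funext ⟨x, y⟩
  by_cases h : x < n ∧ y < 2 * n
  · simp [F, h]
  · have : ¬ (1 ≤ x ∧ x < n ∧ y ≤ 2 * x) := by omega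
    simp only [F, dif_neg h, topCutPattern, if_neg this]

end Sier

theorem sierpinski_topcut_count (n : ℕ) (hn : 2 ≤ n) :
    (PtopCut n).Finite ∧ ((PtopCut n).ncard : ℤ) = 4 * (n : ℤ) ^ 2 - 10 * n + 8 := by
  refine ⟨Sier.PtopCut_finite n, ?_⟩
  have h : (PtopCut n).ncard = (Sier.X n true false false).ncard := by
    rw [Sier.PtopCut_eq, Sier.X]
    exact Sier.ncard_range_congr _ _ (Sier.topCut_link n)
  rw [h, Sier.main_count n true false false hn (by simp)]
  simp
  ring
end

section
/- For every n ≥ 2, the pattern counts of the Sierpiński triangle satisfy A_{2n} + 6 = A_n + 3·B_{n+1} and A_{2n+1} + 6 = 3·A_{n+1} + D_{n+2}. -/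
/-- Oddness of the binomial coefficient, in symmetric coordinates. -/
def gg (x y : ℕ) : Bool := decide (Nat.choose (x + y) x % 2 = 1)

/-- The pattern on the cells `C` at position `(x, y)`. -/
def pat (C : ℕ → ℕ → Prop) [∀ u v, Decidable (C u v)] (z : ℕ × ℕ) : ℕ × ℕ → Bool :=
  fun q => decide (C q.1 q.2) && gg (z.1 + q.1) (z.2 + q.2)

theorem choose_lucas (R J a b : ℕ) (ha : a < 2) (hb : b < 2) :
    Nat.choose (2 * R + a) (2 * J + b) % 2 = (Nat.choose a b * Nat.choose R J) % 2 := by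
  have := @Choose.choose_modEq_choose_mod_mul_choose_div_nat (2 * R + a) (2 * J + b) 2 ⟨Nat.prime_two⟩
  have e1 : (2 * R + a) % 2 = a := by omega
  have e2 : (2 * J + b) % 2 = b := by omega
  have e3 : (2 * R + a) / 2 = R := by omega
  have e4 : (2 * J + b) / 2 = J := by omega
  rw [e1, e2, e3, e4] at this
  exact this

theorem gg_lucas (x y : ℕ) :
    gg x y = (gg (x / 2) (y / 2) && !(decide (x % 2 = 1 ∧ y % 2 = 1))) := by
  obtain ⟨X, a, ha, rfl⟩ : ∃ X a, a < 2 ∧ x = 2 * X + a := ⟨x / 2, x % 2, by omega, by omega⟩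
  obtain ⟨Y, b, hb, rfl⟩ : ∃ X a, a < 2 ∧ y = 2 * X + a := ⟨y / 2, y % 2, by omega, by omega⟩
  have e3 : (2 * X + a) / 2 = X := by omega
  have e4 : (2 * Y + b) / 2 = Y := by omega
  rw [e3, e4]
  unfold gg
  interval_cases a <;> interval_cases b
  · have := choose_lucas (X + Y) X 0 0 (by omega) (by omega)
    simp only [show 2 * X + 0 + (2 * Y + 0) = 2 * (X + Y) + 0 by ring, this]
    simp
  · have := choose_lucas (X + Y) X 1 0 (by omega) (by omega)
    simp only [show 2 * X + 0 + (2 * Y + 1) = 2 * (X + Y) + 1 by ring, this]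
    simp
  · have := choose_lucas (X + Y) X 1 1 (by omega) (by omega)
    simp only [show 2 * X + 1 + (2 * Y + 0) = 2 * (X + Y) + 1 by ring, this]
    simp
  · have := choose_lucas (X + Y + 1) X 0 1 (by omega) (by omega)
    simp only [show 2 * X + 1 + (2 * Y + 1) = 2 * (X + Y + 1) + 0 by ring, this]
    simp [Nat.add_mod]

theorem gg_zero : gg 0 0 = true := by decide

/-- The three-fold symmetry. -/
theorem gg_rot (s : ℕ) : ∀ x y z : ℕ, x + y + z + 1 = 2 ^ s → gg x y = gg z x := by
  induction s with
  | zero =>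
    intro x y z h
    obtain ⟨rfl, rfl, rfl⟩ : x = 0 ∧ y = 0 ∧ z = 0 := by
      simp at h; omega
    rfl
  | succ s ih =>
    intro x y z h
    rw [pow_succ] at h
    rw [gg_lucas x y, gg_lucas z x]
    by_cases c : x % 2 + y % 2 + z % 2 = 1
    · rw [ih (x / 2) (y / 2) (z / 2) (by omega)]
      have h1 : ¬ (x % 2 = 1 ∧ y % 2 = 1) := by omega
      have h2 : ¬ (z % 2 = 1 ∧ x % 2 = 1) := by omega
      simp only [h1, h2]
    · have h1 : (x % 2 = 1 ∧ y % 2 = 1) := by omega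
      have h2 : (z % 2 = 1 ∧ x % 2 = 1) := by omega
      simp [h1, h2]

theorem gg_diag (s : ℕ) : ∀ x y : ℕ, x + y + 1 = 2 ^ s → gg x y = true := by
  induction s with
  | zero =>
    intro x y h
    obtain ⟨rfl, rfl⟩ : x = 0 ∧ y = 0 := by
      simp at h; omega
    rfl
  | succ s ih =>
    intro x y h
    rw [pow_succ] at h
    rw [gg_lucas x y, ih (x / 2) (y / 2) (by omega)]
    have h1 : ¬ (x % 2 = 1 ∧ y % 2 = 1) := by omega
    simp only [h1]
    rfl

theorem gg_void (s : ℕ) : ∀ x y : ℕ, x < 2 ^ s → y < 2 ^ s → 2 ^ s ≤ x + y → gg x y = false := by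
  induction s with
  | zero =>
    intro x y h1 h2 h3
    simp at h1 h2 h3
    omega
  | succ s ih =>
    intro x y h1 h2 h3
    rw [pow_succ] at h1 h2 h3
    rw [gg_lucas x y]
    by_cases c : x % 2 = 1 ∧ y % 2 = 1
    · simp [c]
    · rw [ih (x / 2) (y / 2) (by omega) (by omega) (by omega)]
      rfl

theorem gg_comm (x y : ℕ) : gg x y = gg y x := by
  unfold gg
  rw [Nat.add_comm y x, ← Nat.choose_symm_add]

theorem gg_edge (s : ℕ) : ∀ x : ℕ, x < 2 ^ s → gg x (2 ^ s) = true := by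
  induction s with
  | zero =>
    intro x h
    obtain rfl : x = 0 := by simpa using h
    decide
  | succ s ih =>
    intro x h
    rw [pow_succ] at h
    rw [gg_lucas, pow_succ, Nat.mul_div_cancel _ (by norm_num), ih (x / 2) (by omega)]
    simp

/-! ### Counting -/

/-- Number of distinct patterns with cells `C`. -/
noncomputable def TT (C : ℕ → ℕ → Prop) [∀ u v, Decidable (C u v)] : ℕ :=
  (Set.range (pat C)).ncard

/-- Patterns of size `N` in parity class `(α, β)`. -/
def cls (N α β : ℕ) : Set (ℕ × ℕ → Bool) :=
  Set.range (fun z : ℕ × ℕ => pat (fun u v => u + v < N) (2 * z.1 + α, 2 * z.2 + β))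

theorem ncard_range_kernel {ι A B : Type*} (F : ι → A) (G : ι → B)
    (h : ∀ x y, F x = F y ↔ G x = G y) : (Set.range F).ncard = (Set.range G).ncard := by
  classical
  refine Set.ncard_congr (fun a ha => G ha.choose) ?_ ?_ ?_
  · intro a ha; exact ⟨_, rfl⟩
  · intro a b ha hb hab
    have := (h _ _).2 hab
    rw [ha.choose_spec, hb.choose_spec] at this
    exact this
  · rintro _ ⟨x, rfl⟩
    refine ⟨F x, ⟨x, rfl⟩, ?_⟩
    exact (h _ _).1 (⟨x, rfl⟩ : ∃ y, F y = F x).choose_spec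

theorem cls_card (N α β : ℕ) (C : ℕ → ℕ → Prop) [∀ u v, Decidable (C u v)]
    (h1 : ∀ u v, u + v < N → ¬ ((α + u) % 2 = 1 ∧ (β + v) % 2 = 1) →
      C ((α + u) / 2) ((β + v) / 2))
    (h2 : ∀ u' v', C u' v' → ∃ u v, u + v < N ∧ (α + u) / 2 = u' ∧ (β + v) / 2 = v' ∧
      ¬ ((α + u) % 2 = 1 ∧ (β + v) % 2 = 1)) :
    (cls N α β).ncard = TT C := by
  unfold cls TT
  apply ncard_range_kernel
  have key : ∀ x y u v, gg (2 * x + α + u) (2 * y + β + v) =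
      (gg (x + (α + u) / 2) (y + (β + v) / 2) &&
        !(decide ((α + u) % 2 = 1 ∧ (β + v) % 2 = 1))) := by
    intro x y u v
    rw [gg_lucas]
    have e1 : (2 * x + α + u) / 2 = x + (α + u) / 2 := by omega
    have e2 : (2 * y + β + v) / 2 = y + (β + v) / 2 := by omega
    have e3 : (2 * x + α + u) % 2 = (α + u) % 2 := by omega
    have e4 : (2 * y + β + v) % 2 = (β + v) % 2 := by omega
    rw [e1, e2, e3, e4]
  rintro ⟨x, y⟩ ⟨x', y'⟩
  constructor
  · intro h
    funext ⟨u', v'⟩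
    simp only [pat]
    by_cases c : C u' v'
    · obtain ⟨u, v, huv, rfl, rfl, hp⟩ := h2 u' v' c
      have := congrFun h (u, v)
      simp only [pat, key, huv, hp] at this
      simp only [c]
      simpa using this
    · simp [c]
  · intro h
    funext ⟨u, v⟩
    simp only [pat, key]
    by_cases c : u + v < N
    · by_cases hp : ((α + u) % 2 = 1 ∧ (β + v) % 2 = 1)
      · simp [hp]
      · have := congrFun h ((α + u) / 2, (β + v) / 2)
        simp only [pat, h1 u v c hp] at this
        simp only [hp, c]
        simpa using this
    · simp [c]

theorem finite_supp (n : ℕ) :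
    {p : ℕ × ℕ → Bool | ∀ q, p q = true → q.1 + q.2 < n}.Finite := by
  classical
  let S : Finset (ℕ × ℕ) := Finset.range n ×ˢ Finset.range n
  refine ((S.powerset.finite_toSet).image (fun s q => decide (q ∈ s))).subset ?_
  intro p hp
  refine ⟨S.filter (fun q => p q = true), ?_, ?_⟩
  · simp only [Finset.coe_powerset, Set.mem_preimage, Set.mem_powerset_iff, Finset.coe_subset]
    exact Finset.filter_subset _ _
  · funext q
    have := hp q
    by_cases c : p q = true
    · have h := this c
      have : q ∈ S := by
        simp only [S, Finset.mem_product, Finset.mem_range]; omega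
      simp [c, this]
    · simp [c]

theorem pat_supp (n : ℕ) (C : ℕ → ℕ → Prop) [∀ u v, Decidable (C u v)]
    (hC : ∀ u v, C u v → u + v < n) (z : ℕ × ℕ) (q : ℕ × ℕ) (h : pat C z q = true) :
    q.1 + q.2 < n := by
  simp only [pat, Bool.and_eq_true, decide_eq_true_eq] at h
  exact hC _ _ h.1

theorem pat_finite (n : ℕ) (C : ℕ → ℕ → Prop) [∀ u v, Decidable (C u v)]
    (hC : ∀ u v, C u v → u + v < n) : (Set.range (pat C)).Finite := by
  refine (finite_supp n).subset ?_
  rintro _ ⟨z, rfl⟩ q h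
  exact pat_supp n C hC z q h

/-- Rotation never decreases the number of patterns. -/
theorem TT_rot (n : ℕ) (C C' : ℕ → ℕ → Prop) [∀ u v, Decidable (C u v)]
    [∀ u v, Decidable (C' u v)]
    (hC : ∀ u v, C u v → u + v < n) (hC' : ∀ u v, C' u v → u + v < n)
    (h : ∀ u v w, u + v + w + 1 = n → (C' u v ↔ C v w)) : TT C ≤ TT C' := by
  unfold TT
  refine Set.ncard_le_ncard_of_injOn
    (fun p q => decide (q.1 + q.2 < n) && p (q.2, n - 1 - q.1 - q.2)) ?_ ?_ (pat_finite n C' hC')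
  · rintro _ ⟨⟨x, y⟩, rfl⟩
    have hlt : x + y + n < 2 ^ (x + y + n) := Nat.lt_two_pow_self
    refine ⟨(2 ^ (x + y + n) - x - y - n, x), ?_⟩
    funext ⟨u, v⟩
    simp only [pat]
    by_cases c : u + v < n
    · have hw := h u v (n - 1 - u - v) (by omega)
      rw [gg_rot (x + y + n) (x + v) (y + (n - 1 - u - v)) (2 ^ (x + y + n) - x - y - n + u)
        (by omega)]
      simp [c, hw]
    · have : ¬ C' u v := fun hh => c (hC' _ _ hh)
      simp [c, this]
  · rintro _ ⟨z, rfl⟩ _ ⟨z', rfl⟩ hh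
    funext ⟨u, v⟩
    by_cases c : u + v < n
    · have := congrFun hh (n - 1 - u - v, u)
      have e1 : n - 1 - u - v + u < n := by omega
      have e2 : n - 1 - (n - 1 - u - v) - u = v := by omega
      simpa [e1, e2] using this
    · have a1 : pat C z (u, v) = false := by
        by_contra hne
        exact c (pat_supp n C hC z (u, v) (by simpa using hne))
      have a2 : pat C z' (u, v) = false := by
        by_contra hne
        exact c (pat_supp n C hC z' (u, v) (by simpa using hne))
      rw [a1, a2]

/-! ### Parity classes -/

theorem mem_cls (N α β x y : ℕ) (hx : x % 2 = α) (hy : y % 2 = β) :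
    pat (fun u v => u + v < N) (x, y) ∈ cls N α β := by
  refine ⟨(x / 2, y / 2), ?_⟩
  have e1 : 2 * (x / 2) + α = x := by omega
  have e2 : 2 * (y / 2) + β = y := by omega
  simp only [e1, e2]

theorem cls_union (N : ℕ) : Set.range (pat (fun u v => u + v < N)) =
    cls N 0 0 ∪ cls N 0 1 ∪ cls N 1 0 ∪ cls N 1 1 := by
  ext p
  constructor
  · rintro ⟨⟨x, y⟩, rfl⟩
    rcases Nat.mod_two_eq_zero_or_one x with hx | hx <;>
    rcases Nat.mod_two_eq_zero_or_one y with hy | hy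
    · exact Or.inl (Or.inl (Or.inl (mem_cls _ _ _ _ _ hx hy)))
    · exact Or.inl (Or.inl (Or.inr (mem_cls _ _ _ _ _ hx hy)))
    · exact Or.inl (Or.inr (mem_cls _ _ _ _ _ hx hy))
    · exact Or.inr (mem_cls _ _ _ _ _ hx hy)
  · rintro (((⟨z, rfl⟩ | ⟨z, rfl⟩) | ⟨z, rfl⟩) | ⟨z, rfl⟩) <;> exact ⟨_, rfl⟩

/-- The pattern filled exactly at one cell. -/
def single (a b : ℕ) : ℕ × ℕ → Bool := fun q => decide (q = (a, b))

theorem pow_big (N : ℕ) : ∃ s, 1 ≤ s ∧ 4 * N + 8 < 2 ^ s :=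
  ⟨4 * N + 8, by omega, Nat.lt_two_pow_self⟩

theorem blank_mem (N α β : ℕ) (hα : α < 2) (hβ : β < 2) : blankUp ∈ cls N α β := by
  obtain ⟨s, hs1, hs⟩ := pow_big N
  obtain ⟨M, hM⟩ : ∃ M, 2 ^ s = 2 * M := ⟨2 ^ (s - 1), by rw [← pow_succ']; congr 1; omega⟩
  have h := mem_cls N α β (2 * (M / 2) + 2 + α) (2 * (M / 2) + 2 + β) (by omega) (by omega)
  convert h using 1
  funext ⟨u, v⟩
  simp only [pat, blankUp]
  by_cases c : u + v < N
  · rw [gg_void s _ _ (by omega) (by omega) (by omega)]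
    simp
  · simp [c]

theorem top_mem (N α β : ℕ) (hN : 1 ≤ N) (hα : α + β = 1) : single 0 0 ∈ cls N α β := by
  obtain ⟨s, hs1, hs⟩ := pow_big N
  obtain ⟨M, hM⟩ : ∃ M, 2 ^ s = 2 * M := ⟨2 ^ (s - 1), by rw [← pow_succ']; congr 1; omega⟩
  have h := mem_cls N α β (2 * N + α) (2 ^ s - 1 - (2 * N + α)) (by omega) (by omega)
  convert h using 1
  funext ⟨u, v⟩
  simp only [pat, single]
  by_cases c : u + v < N
  · by_cases c0 : u = 0 ∧ v = 0
    · obtain ⟨rfl, rfl⟩ := c0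
      rw [gg_diag s _ _ (by omega)]
      simp
      omega
    · rw [gg_void s _ _ (by omega) (by omega) (by omega)]
      simp
      omega
  · simp [c]
    omega

theorem left_mem (N α β : ℕ) (hN : 1 ≤ N) (hα : α < 2) (hβ : β < 2) (h : (N + β) % 2 = 1) :
    single 0 (N - 1) ∈ cls N α β := by
  obtain ⟨s, hs1, hs⟩ := pow_big N
  obtain ⟨M, hM⟩ : ∃ M, 2 ^ s = 2 * M := ⟨2 ^ (s - 1), by rw [← pow_succ']; congr 1; omega⟩
  have h := mem_cls N α β (2 * N + α) (2 ^ s + 1 - N) (by omega) (by omega)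
  convert h using 1
  funext ⟨u, v⟩
  simp only [pat, single]
  by_cases c : u + v < N
  · by_cases c0 : u = 0 ∧ v = N - 1
    · obtain ⟨rfl, rfl⟩ := c0
      rw [show 2 ^ s + 1 - N + (N - 1) = 2 ^ s by omega, gg_edge s _ (by omega)]
      simp
      omega
    · rw [gg_void s _ _ (by omega) (by omega) (by omega)]
      simp
      omega
  · simp [c]
    omega

theorem right_mem (N α β : ℕ) (hN : 1 ≤ N) (hα : α < 2) (hβ : β < 2) (h : (N + α) % 2 = 1) :
    single (N - 1) 0 ∈ cls N α β := by
  obtain ⟨s, hs1, hs⟩ := pow_big N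
  obtain ⟨M, hM⟩ : ∃ M, 2 ^ s = 2 * M := ⟨2 ^ (s - 1), by rw [← pow_succ']; congr 1; omega⟩
  have h := mem_cls N α β (2 ^ s + 1 - N) (2 * N + β) (by omega) (by omega)
  convert h using 1
  funext ⟨u, v⟩
  simp only [pat, single]
  by_cases c : u + v < N
  · rw [gg_comm]
    by_cases c0 : v = 0 ∧ u = N - 1
    · obtain ⟨rfl, rfl⟩ := c0
      rw [show 2 ^ s + 1 - N + (N - 1) = 2 ^ s by omega, gg_edge s _ (by omega)]
      simp
      omega
    · rw [gg_void s _ _ (by omega) (by omega) (by omega)]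
      simp
      omega
  · simp [c]
    omega

/-- Local rules satisfied by patterns of a parity class. -/
def Rule (N α β : ℕ) (p : ℕ × ℕ → Bool) : Prop :=
  ∀ u v, p (u, v) = true → u + v < N ∧
    ¬ ((α + u) % 2 = 1 ∧ (β + v) % 2 = 1) ∧
    ((α + u) % 2 = 1 → (β + v) % 2 = 0 → 1 ≤ u →
      p (u - 1, v) = true ∧ p (u - 1, v + 1) = true) ∧
    ((α + u) % 2 = 0 → (β + v) % 2 = 1 → 1 ≤ v →
      p (u, v - 1) = true ∧ p (u + 1, v - 1) = true) ∧
    ((α + u) % 2 = 0 → (β + v) % 2 = 0 → u + v + 1 < N →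
      p (u + 1, v) = true ∧ p (u, v + 1) = true)

theorem gg_step (x y x' y' : ℕ) (h : gg x y = true) (h1 : x' / 2 = x / 2) (h2 : y' / 2 = y / 2)
    (h3 : ¬ (x' % 2 = 1 ∧ y' % 2 = 1)) : gg x' y' = true := by
  rw [gg_lucas] at h ⊢
  simp only [Bool.and_eq_true] at h
  rw [h1, h2, h.1]
  simp only [h3]
  rfl

theorem cls_rule (N α β : ℕ) (p : ℕ × ℕ → Bool) (hp : p ∈ cls N α β) : Rule N α β p := by
  obtain ⟨⟨x, y⟩, rfl⟩ := hp
  intro u v h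
  simp only [pat, Bool.and_eq_true, decide_eq_true_eq] at h ⊢
  obtain ⟨hN, h⟩ := h
  refine ⟨hN, ?_, ?_, ?_, ?_⟩
  · rw [gg_lucas] at h
    simp only [Bool.and_eq_true, Bool.not_eq_true', decide_eq_false_iff_not] at h
    omega
  · intro a b c
    exact ⟨⟨by omega, gg_step _ _ _ _ h (by omega) (by omega) (by omega)⟩,
      ⟨by omega, gg_step _ _ _ _ h (by omega) (by omega) (by omega)⟩⟩
  · intro a b c
    exact ⟨⟨by omega, gg_step _ _ _ _ h (by omega) (by omega) (by omega)⟩,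
      ⟨by omega, gg_step _ _ _ _ h (by omega) (by omega) (by omega)⟩⟩
  · intro a b c
    exact ⟨⟨by omega, gg_step _ _ _ _ h (by omega) (by omega) (by omega)⟩,
      ⟨by omega, gg_step _ _ _ _ h (by omega) (by omega) (by omega)⟩⟩

theorem inter_single (N α β α' β' a b : ℕ) (hα : α < 2) (hβ : β < 2) (hα' : α' < 2)
    (hβ' : β' < 2) (h1 : single a b ∈ cls N α β) (h2 : single a b ∈ cls N α' β')
    (h : ∀ p, Rule N α β p → Rule N α' β' p → ∀ u v, p (u, v) = true → u = a ∧ v = b) :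
    cls N α β ∩ cls N α' β' = {blankUp, single a b} := by
  apply Set.Subset.antisymm
  · rintro p ⟨p1, p2⟩
    have hp := h p (cls_rule _ _ _ _ p1) (cls_rule _ _ _ _ p2)
    by_cases c : p (a, b) = true
    · right
      funext ⟨u, v⟩
      simp only [single]
      by_cases c' : p (u, v) = true
      · obtain ⟨rfl, rfl⟩ := hp u v c'
        simp [c]
      · have : (u, v) ≠ (a, b) := by
          intro e; rw [e] at c'; exact c' c
        simp only [this, decide_false]
        simpa using c'
    · left
      funext ⟨u, v⟩
      simp only [blankUp]
      by_contra c'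
      have cfill : p (u, v) = true := by simpa using c'
      obtain ⟨rfl, rfl⟩ := hp u v cfill
      exact c cfill
  · rintro p (rfl | rfl)
    · exact ⟨blank_mem _ _ _ hα hβ, blank_mem _ _ _ hα' hβ'⟩
    · exact ⟨h1, h2⟩

theorem inter_blank (N α β α' β' : ℕ) (hα : α < 2) (hβ : β < 2) (hα' : α' < 2)
    (hβ' : β' < 2)
    (h : ∀ p, Rule N α β p → Rule N α' β' p → ∀ u v, p (u, v) = true → False) :
    cls N α β ∩ cls N α' β' = {blankUp} := by
  apply Set.Subset.antisymm
  · rintro p ⟨p1, p2⟩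
    have hp := h p (cls_rule _ _ _ _ p1) (cls_rule _ _ _ _ p2)
    funext ⟨u, v⟩
    simp only [blankUp]
    by_contra c'
    exact hp u v (by simpa using c')
  · rintro p rfl
    exact ⟨blank_mem _ _ _ hα hβ, blank_mem _ _ _ hα' hβ'⟩

/-- A filled cell in two classes: neither the cell nor its forced neighbours may be
excluded by the other class. -/
theorem rule_cell (N α β α' β' : ℕ) (p : ℕ × ℕ → Bool) (h : Rule N α β p)
    (h' : Rule N α' β' p) (u v : ℕ) (huv : p (u, v) = true) :
    u + v < N ∧
    ¬ ((α + u) % 2 = 1 ∧ (β + v) % 2 = 1) ∧ ¬ ((α' + u) % 2 = 1 ∧ (β' + v) % 2 = 1) ∧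
    ((α + u) % 2 = 1 → (β + v) % 2 = 0 → 1 ≤ u →
      ¬ ((α' + u) % 2 = 0 ∧ (β' + v) % 2 = 1) ∧ ¬ ((α' + u) % 2 = 0 ∧ (β' + v) % 2 = 0)) ∧
    ((α + u) % 2 = 0 → (β + v) % 2 = 1 → 1 ≤ v →
      ¬ ((α' + u) % 2 = 1 ∧ (β' + v) % 2 = 0) ∧ ¬ ((α' + u) % 2 = 0 ∧ (β' + v) % 2 = 0)) ∧
    ((α + u) % 2 = 0 → (β + v) % 2 = 0 → u + v + 1 < N →
      ¬ ((α' + u) % 2 = 0 ∧ (β' + v) % 2 = 1) ∧ ¬ ((α' + u) % 2 = 1 ∧ (β' + v) % 2 = 0)) := by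
  obtain ⟨a1, a2, a3, a4, a5⟩ := h u v huv
  refine ⟨a1, a2, (h' u v huv).2.1, ?_, ?_, ?_⟩
  · intro b1 b2 b3
    obtain ⟨c1, c2⟩ := a3 b1 b2 b3
    have d1 := (h' _ _ c1).2.1
    have d2 := (h' _ _ c2).2.1
    omega
  · intro b1 b2 b3
    obtain ⟨c1, c2⟩ := a4 b1 b2 b3
    have d1 := (h' _ _ c1).2.1
    have d2 := (h' _ _ c2).2.1
    omega
  · intro b1 b2 b3
    obtain ⟨c1, c2⟩ := a5 b1 b2 b3
    have d1 := (h' _ _ c1).2.1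
    have d2 := (h' _ _ c2).2.1
    omega

theorem union_count {A : Type*} (X Y₁ Y₂ Y₃ : Set A) (z a b c : A)
    (fX : X.Finite) (f1 : Y₁.Finite) (f2 : Y₂.Finite) (f3 : Y₃.Finite)
    (h12 : Y₁ ∩ Y₂ = {z, a}) (h13 : Y₁ ∩ Y₃ = {z, b}) (h23 : Y₂ ∩ Y₃ = {z, c})
    (h1 : X ∩ Y₁ = {z}) (h2 : X ∩ Y₂ = {z}) (h3 : X ∩ Y₃ = {z})
    (za : z ≠ a) (zb : z ≠ b) (zc : z ≠ c) (bc : b ≠ c) :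
    (X ∪ (Y₁ ∪ Y₂ ∪ Y₃)).ncard + 6 = X.ncard + Y₁.ncard + Y₂.ncard + Y₃.ncard := by
  have e1 := Set.ncard_union_add_ncard_inter Y₁ Y₂ f1 f2
  have e2 := Set.ncard_union_add_ncard_inter (Y₁ ∪ Y₂) Y₃ (f1.union f2) f3
  have e3 := Set.ncard_union_add_ncard_inter X (Y₁ ∪ Y₂ ∪ Y₃) fX ((f1.union f2).union f3)
  rw [h12, Set.ncard_pair za] at e1
  have i2 : (Y₁ ∪ Y₂) ∩ Y₃ = {z, b, c} := by
    rw [Set.union_inter_distrib_right, h13, h23]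
    ext t; simp; tauto
  have n2 : ({z, b, c} : Set A).ncard = 3 := Set.ncard_eq_three.2 ⟨z, b, c, zb, zc, bc, rfl⟩
  rw [i2, n2] at e2
  have i3 : X ∩ (Y₁ ∪ Y₂ ∪ Y₃) = {z} := by
    rw [Set.inter_union_distrib_left, Set.inter_union_distrib_left, h1, h2, h3]
    simp
  rw [i3, Set.ncard_singleton] at e3
  omega

theorem cls_finite (N α β : ℕ) : (cls N α β).Finite := by
  refine (pat_finite N (fun u v => u + v < N) (fun _ _ h => h)).subset ?_
  rintro _ ⟨z, rfl⟩
  exact ⟨_, rfl⟩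

theorem blank_ne_single (a b : ℕ) : blankUp ≠ single a b := by
  intro h
  have := congrFun h (a, b)
  simp [blankUp, single] at this

theorem single_ne (a b c d : ℕ) (hne : (a, b) ≠ (c, d)) : single a b ≠ single c d := by
  intro h
  have := congrFun h (a, b)
  simp only [single, hne] at this
  simp at this

set_option maxHeartbeats 4000000 in
theorem count_even (n : ℕ) (hn : 2 ≤ n) : TT (fun u v => u + v < 2 * n) + 6 =
    (cls (2 * n) 0 0).ncard + (cls (2 * n) 0 1).ncard + (cls (2 * n) 1 0).ncard
      + (cls (2 * n) 1 1).ncard := by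
  unfold TT
  rw [cls_union, Set.union_assoc, Set.union_assoc, ← Set.union_assoc (cls (2 * n) 0 1)]
  refine union_count _ _ _ _ blankUp (single 0 0) (single 0 (2 * n - 1)) (single (2 * n - 1) 0)
    (cls_finite _ _ _) (cls_finite _ _ _) (cls_finite _ _ _) (cls_finite _ _ _)
    ?_ ?_ ?_ ?_ ?_ ?_ (blank_ne_single _ _) (blank_ne_single _ _) (blank_ne_single _ _)
    (single_ne _ _ _ _ (by simp; omega))
  · refine inter_single _ _ _ _ _ _ _ (by omega) (by omega) (by omega) (by omega)
      (top_mem _ _ _ (by omega) (by omega)) (top_mem _ _ _ (by omega) (by omega)) ?_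
    intro p r1 r2 u v h
    have k1 := rule_cell _ _ _ _ _ p r1 r2 u v h
    have k2 := rule_cell _ _ _ _ _ p r2 r1 u v h
    rcases Nat.mod_two_eq_zero_or_one u with hu | hu <;>
    rcases Nat.mod_two_eq_zero_or_one v with hv | hv <;>
    simp [Nat.add_mod 1, hu, hv] at k1 k2 <;> omega
  · refine inter_single _ _ _ _ _ _ _ (by omega) (by omega) (by omega) (by omega)
      (left_mem _ _ _ (by omega) (by omega) (by omega) (by omega))
      (left_mem _ _ _ (by omega) (by omega) (by omega) (by omega)) ?_
    intro p r1 r2 u v h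
    have k1 := rule_cell _ _ _ _ _ p r1 r2 u v h
    have k2 := rule_cell _ _ _ _ _ p r2 r1 u v h
    rcases Nat.mod_two_eq_zero_or_one u with hu | hu <;>
    rcases Nat.mod_two_eq_zero_or_one v with hv | hv <;>
    simp [Nat.add_mod 1, hu, hv] at k1 k2 <;> omega
  · refine inter_single _ _ _ _ _ _ _ (by omega) (by omega) (by omega) (by omega)
      (right_mem _ _ _ (by omega) (by omega) (by omega) (by omega))
      (right_mem _ _ _ (by omega) (by omega) (by omega) (by omega)) ?_
    intro p r1 r2 u v h
    have k1 := rule_cell _ _ _ _ _ p r1 r2 u v h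
    have k2 := rule_cell _ _ _ _ _ p r2 r1 u v h
    rcases Nat.mod_two_eq_zero_or_one u with hu | hu <;>
    rcases Nat.mod_two_eq_zero_or_one v with hv | hv <;>
    simp [Nat.add_mod 1, hu, hv] at k1 k2 <;> omega
  all_goals
    refine inter_blank _ _ _ _ _ (by omega) (by omega) (by omega) (by omega) ?_
    intro p r1 r2 u v h
    have k1 := rule_cell _ _ _ _ _ p r1 r2 u v h
    have k2 := rule_cell _ _ _ _ _ p r2 r1 u v h
    rcases Nat.mod_two_eq_zero_or_one u with hu | hu <;>
    rcases Nat.mod_two_eq_zero_or_one v with hv | hv <;>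
    simp [Nat.add_mod 1, hu, hv] at k1 k2 <;> omega

set_option maxHeartbeats 4000000 in
theorem count_odd (n : ℕ) (hn : 2 ≤ n) : TT (fun u v => u + v < 2 * n + 1) + 6 =
    (cls (2 * n + 1) 1 1).ncard + (cls (2 * n + 1) 0 0).ncard + (cls (2 * n + 1) 0 1).ncard
      + (cls (2 * n + 1) 1 0).ncard := by
  unfold TT
  rw [cls_union, Set.union_comm]
  refine union_count _ _ _ _ blankUp (single (2 * n + 1 - 1) 0) (single 0 (2 * n + 1 - 1))
    (single 0 0)
    (cls_finite _ _ _) (cls_finite _ _ _) (cls_finite _ _ _) (cls_finite _ _ _)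
    ?_ ?_ ?_ ?_ ?_ ?_ (blank_ne_single _ _) (blank_ne_single _ _) (blank_ne_single _ _)
    (single_ne _ _ _ _ (by simp; omega))
  · refine inter_single _ _ _ _ _ _ _ (by omega) (by omega) (by omega) (by omega)
      (right_mem _ _ _ (by omega) (by omega) (by omega) (by omega))
      (right_mem _ _ _ (by omega) (by omega) (by omega) (by omega)) ?_
    intro p r1 r2 u v h
    have k1 := rule_cell _ _ _ _ _ p r1 r2 u v h
    have k2 := rule_cell _ _ _ _ _ p r2 r1 u v h
    rcases Nat.mod_two_eq_zero_or_one u with hu | hu <;>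
    rcases Nat.mod_two_eq_zero_or_one v with hv | hv <;>
    simp [Nat.add_mod 1, hu, hv] at k1 k2 <;> omega
  · refine inter_single _ _ _ _ _ _ _ (by omega) (by omega) (by omega) (by omega)
      (left_mem _ _ _ (by omega) (by omega) (by omega) (by omega))
      (left_mem _ _ _ (by omega) (by omega) (by omega) (by omega)) ?_
    intro p r1 r2 u v h
    have k1 := rule_cell _ _ _ _ _ p r1 r2 u v h
    have k2 := rule_cell _ _ _ _ _ p r2 r1 u v h
    rcases Nat.mod_two_eq_zero_or_one u with hu | hu <;>
    rcases Nat.mod_two_eq_zero_or_one v with hv | hv <;>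
    simp [Nat.add_mod 1, hu, hv] at k1 k2 <;> omega
  · refine inter_single _ _ _ _ _ _ _ (by omega) (by omega) (by omega) (by omega)
      (top_mem _ _ _ (by omega) (by omega)) (top_mem _ _ _ (by omega) (by omega)) ?_
    intro p r1 r2 u v h
    have k1 := rule_cell _ _ _ _ _ p r1 r2 u v h
    have k2 := rule_cell _ _ _ _ _ p r2 r1 u v h
    rcases Nat.mod_two_eq_zero_or_one u with hu | hu <;>
    rcases Nat.mod_two_eq_zero_or_one v with hv | hv <;>
    simp [Nat.add_mod 1, hu, hv] at k1 k2 <;> omega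
  all_goals
    refine inter_blank _ _ _ _ _ (by omega) (by omega) (by omega) (by omega) ?_
    intro p r1 r2 u v h
    have k1 := rule_cell _ _ _ _ _ p r1 r2 u v h
    have k2 := rule_cell _ _ _ _ _ p r2 r1 u v h
    rcases Nat.mod_two_eq_zero_or_one u with hu | hu <;>
    rcases Nat.mod_two_eq_zero_or_one v with hv | hv <;>
    simp [Nat.add_mod 1, hu, hv] at k1 k2 <;> omega

/-! ### Cells seen by each class -/

theorem exists_cell (N α β u' v' : ℕ)
    (h : ∃ a b, a + b ≤ 1 ∧ α ≤ 2 * u' + a ∧ β ≤ 2 * v' + b ∧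
      2 * u' + a + 2 * v' + b < N + α + β) :
    ∃ u v, u + v < N ∧ (α + u) / 2 = u' ∧ (β + v) / 2 = v' ∧
      ¬ ((α + u) % 2 = 1 ∧ (β + v) % 2 = 1) := by
  obtain ⟨a, b, h1, h2, h3, h4⟩ := h
  exact ⟨2 * u' + a - α, 2 * v' + b - β, by omega, by omega, by omega, by omega⟩

theorem even00 (n : ℕ) : (cls (2 * n) 0 0).ncard = TT (fun u v => u + v < n) := by
  apply cls_card
  · intro u v h1 h2; omega
  · intro u v h
    exact exists_cell _ _ _ _ _ ⟨0, 0, by omega, by omega, by omega, by omega⟩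

theorem even01 (n : ℕ) : (cls (2 * n) 0 1).ncard =
    TT (fun u v => u + v < n + 1 ∧ ¬ (u = n ∧ v = 0)) := by
  apply cls_card
  · intro u v h1 h2; omega
  · intro u v h
    apply exists_cell
    by_cases c : v = 0
    · exact ⟨0, 1, by omega, by omega, by omega, by omega⟩
    · exact ⟨0, 0, by omega, by omega, by omega, by omega⟩

theorem even10 (n : ℕ) : (cls (2 * n) 1 0).ncard =
    TT (fun u v => u + v < n + 1 ∧ ¬ (u = 0 ∧ v = n)) := by
  apply cls_card
  · intro u v h1 h2; omega
  · intro u v h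
    apply exists_cell
    by_cases c : u = 0
    · exact ⟨1, 0, by omega, by omega, by omega, by omega⟩
    · exact ⟨0, 0, by omega, by omega, by omega, by omega⟩

theorem even11 (n : ℕ) : (cls (2 * n) 1 1).ncard =
    TT (fun u v => u + v < n + 1 ∧ ¬ (u = 0 ∧ v = 0)) := by
  apply cls_card
  · intro u v h1 h2; omega
  · intro u v h
    apply exists_cell
    by_cases c : u = 0
    · exact ⟨1, 0, by omega, by omega, by omega, by omega⟩
    · by_cases c : v = 0
      · exact ⟨0, 1, by omega, by omega, by omega, by omega⟩
      · exact ⟨0, 0, by omega, by omega, by omega, by omega⟩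

theorem odd00 (n : ℕ) : (cls (2 * n + 1) 0 0).ncard = TT (fun u v => u + v < n + 1) := by
  apply cls_card
  · intro u v h1 h2; omega
  · intro u v h
    exact exists_cell _ _ _ _ _ ⟨0, 0, by omega, by omega, by omega, by omega⟩

theorem odd01 (n : ℕ) : (cls (2 * n + 1) 0 1).ncard = TT (fun u v => u + v < n + 1) := by
  apply cls_card
  · intro u v h1 h2; omega
  · intro u v h
    exact exists_cell _ _ _ _ _ ⟨0, 1, by omega, by omega, by omega, by omega⟩

theorem odd10 (n : ℕ) : (cls (2 * n + 1) 1 0).ncard = TT (fun u v => u + v < n + 1) := by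
  apply cls_card
  · intro u v h1 h2; omega
  · intro u v h
    exact exists_cell _ _ _ _ _ ⟨1, 0, by omega, by omega, by omega, by omega⟩

theorem odd11 (n : ℕ) (hn : 2 ≤ n) : (cls (2 * n + 1) 1 1).ncard =
    TT (fun u v => u + v < n + 2 ∧ ¬ (u = 0 ∧ v = 0) ∧ ¬ (u = n + 1 ∧ v = 0) ∧
      ¬ (u = 0 ∧ v = n + 1)) := by
  apply cls_card
  · intro u v h1 h2; omega
  · intro u v h
    apply exists_cell
    by_cases c : u = 0
    · exact ⟨1, 0, by omega, by omega, by omega, by omega⟩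
    · by_cases c : v = 0
      · exact ⟨0, 1, by omega, by omega, by omega, by omega⟩
      · exact ⟨0, 0, by omega, by omega, by omega, by omega⟩

theorem cuts_eq (n : ℕ) :
    TT (fun u v => u + v < n + 1 ∧ ¬ (u = n ∧ v = 0)) =
      TT (fun u v => u + v < n + 1 ∧ ¬ (u = 0 ∧ v = 0)) ∧
    TT (fun u v => u + v < n + 1 ∧ ¬ (u = 0 ∧ v = n)) =
      TT (fun u v => u + v < n + 1 ∧ ¬ (u = 0 ∧ v = 0)) := by
  have h1 : TT (fun u v => u + v < n + 1 ∧ ¬ (u = n ∧ v = 0)) ≤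
      TT (fun u v => u + v < n + 1 ∧ ¬ (u = 0 ∧ v = n)) := by
    apply TT_rot (n + 1) <;> intros <;> omega
  have h2 : TT (fun u v => u + v < n + 1 ∧ ¬ (u = 0 ∧ v = n)) ≤
      TT (fun u v => u + v < n + 1 ∧ ¬ (u = 0 ∧ v = 0)) := by
    apply TT_rot (n + 1) <;> intros <;> omega
  have h3 : TT (fun u v => u + v < n + 1 ∧ ¬ (u = 0 ∧ v = 0)) ≤
      TT (fun u v => u + v < n + 1 ∧ ¬ (u = n ∧ v = 0)) := by
    apply TT_rot (n + 1) <;> intros <;> omega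
  omega

/-! ### Back to the original patterns -/

/-- Change of coordinates from `(u, v)` to `(k, m)`. -/
def toKM (p : ℕ × ℕ → Bool) : ℕ × ℕ → Bool := fun q =>
  decide (q.2 % 2 = 0 ∧ q.2 ≤ 2 * q.1) && p (q.2 / 2, q.1 - q.2 / 2)

theorem toKM_inj : Function.Injective toKM := by
  intro p p' h
  funext ⟨u, v⟩
  have := congrFun h (u + v, 2 * u)
  have e : 2 * u ≤ 2 * (u + v) := by omega
  simpa [toKM] using this

theorem toKM_card (C : ℕ → ℕ → Prop) [∀ u v, Decidable (C u v)] (E : ℕ × ℕ → Prop)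
    [∀ q, Decidable (E q)] (h1 : ∀ q, E q → q.2 ≤ 2 * q.1)
    (h2 : ∀ u v, C u v ↔ E (u + v, 2 * u)) :
    {p | ∃ r c : ℕ, c % 2 = 0 ∧ c ≤ 2 * r ∧
      p = fun q => if E q then filled (r + q.1) (c + q.2) else false}.ncard = TT C := by
  unfold TT
  rw [← Set.ncard_image_of_injective (Set.range (pat C)) toKM_inj, ← Set.range_comp]
  have key : ∀ x y, toKM (pat C (x, y)) =
      fun q => if E q then filled (x + y + q.1) (2 * x + q.2) else false := by
    intro x y
    funext ⟨k, m⟩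
    simp only [toKM, pat]
    by_cases c : m % 2 = 0 ∧ m ≤ 2 * k
    · have e := h2 (m / 2) (k - m / 2)
      rw [show m / 2 + (k - m / 2) = k by omega, show 2 * (m / 2) = m by omega] at e
      have e2 : (2 * x + m) % 2 = 0 := by omega
      have e3 : (2 * x + m) / 2 = x + m / 2 := by omega
      have e4 : x + m / 2 + (y + (k - m / 2)) = x + y + k := by omega
      by_cases cE : E (k, m)
      · simp [c, e, cE, filled, gg, e2, e3, e4]
      · simp [e, cE]
    · by_cases cE : E (k, m)
      · have hh := h1 _ cE
        simp only at hh
        have e2 : ¬ (2 * x + m) % 2 = 0 := by omega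
        simp only [c, filled, e2]
        simp
      · simp [c, cE]
  congr 1
  ext p
  constructor
  · rintro ⟨r, c, hc, hcr, rfl⟩
    refine ⟨(c / 2, r - c / 2), ?_⟩
    rw [Function.comp, key]
    rw [show c / 2 + (r - c / 2) = r by omega, show 2 * (c / 2) = c by omega]
  · rintro ⟨⟨x, y⟩, rfl⟩
    refine ⟨x + y, 2 * x, by omega, by omega, ?_⟩
    rw [Function.comp, key]

theorem Pup_card (n : ℕ) : (Pup n).ncard = TT (fun u v => u + v < n) := by
  refine toKM_card _ (fun q => q.1 < n ∧ q.2 ≤ 2 * q.1) ?_ ?_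
  · intro q h; exact h.2
  · intro u v; simp only; omega

theorem PtopCut_card (n : ℕ) :
    (PtopCut (n + 1)).ncard = TT (fun u v => u + v < n + 1 ∧ ¬ (u = 0 ∧ v = 0)) := by
  refine toKM_card _ (fun q => 1 ≤ q.1 ∧ q.1 < n + 1 ∧ q.2 ≤ 2 * q.1) ?_ ?_
  · intro q h; exact h.2.2
  · intro u v; simp only; omega

theorem PfullyCut_card (n : ℕ) : (PfullyCut (n + 2)).ncard =
    TT (fun u v => u + v < n + 2 ∧ ¬ (u = 0 ∧ v = 0) ∧ ¬ (u = n + 1 ∧ v = 0) ∧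
      ¬ (u = 0 ∧ v = n + 1)) := by
  refine toKM_card _ (fun q => (q.1 < n + 2 ∧ q.2 ≤ 2 * q.1) ∧ q ≠ (0, 0) ∧
    ¬(q.1 = n + 2 - 1 ∧ (q.2 = 0 ∨ q.2 = 2 * (n + 2 - 1)))) ?_ ?_
  · intro q h; exact h.1.2
  · intro u v
    simp only [ne_eq, Prod.mk.injEq]
    omega

theorem sierpinski_recursion_A (n : ℕ) (hn : 2 ≤ n) :
    (Pup (2 * n)).ncard + 6 = (Pup n).ncard + 3 * (PtopCut (n + 1)).ncard ∧
    (Pup (2 * n + 1)).ncard + 6 = 3 * (Pup (n + 1)).ncard + (PfullyCut (n + 2)).ncard := by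
  have c := cuts_eq n
  refine ⟨?_, ?_⟩
  · rw [Pup_card, Pup_card, PtopCut_card, count_even n hn, even00, even01 n, even10 n,
      even11 n, c.1, c.2]
    omega
  · rw [Pup_card, Pup_card, PfullyCut_card, count_odd n hn, odd00, odd01, odd10, odd11 n hn]
    omega
end
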